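/- arXiv:1606.03499 — 2 statements merged into one kernel-verified Lean document; each statement's English description precedes it below -/
import Mathlib

section
/- Let n ≥ 1 and K₂ ≥ K₁ > 0. There exist constants c > 0 and r₀ > 0, depending only on n, K₁, K₂, such that for every smooth ℤⁿ-periodic real-valued eigenfunction ψ : ℝⁿ → ℝ of the Euclidean Laplacian with eigenvalue λ ≥ 1 and every r ∈ [λ^{-1/2}, r₀]: if K₁ rⁿ ≤ ∫_{B_r(x)} ψ² dx ≤ K₂ rⁿ for all x ∈ ℝⁿ, then for every x ∈ ℝⁿ and every 0 < s < 10r one has log( sup_{B_{2s}(x)} ψ² / sup_{B_s(x)} ψ² ) ≤ c · r · √λ. -/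
open MeasureTheory Metric Filter Real

noncomputable section

/-- `ψ : ℝⁿ → ℝ` is `ℤⁿ`-periodic: `ψ (x + v) = ψ x` for every integer vector `v`. -/
def ZnPeriodic (n : ℕ) (ψ : EuclideanSpace ℝ (Fin n) → ℝ) : Prop :=
  ∀ (x : EuclideanSpace ℝ (Fin n)) (v : Fin n → ℤ),
    ψ (show EuclideanSpace ℝ (Fin n) from WithLp.toLp 2 fun i => x i + (v i : ℝ)) = ψ x

/-- The Euclidean Laplacian `Δψ = ∑ᵢ ∂²ψ/∂xᵢ²`. -/
def lap (n : ℕ) (ψ : EuclideanSpace ℝ (Fin n) → ℝ) (x : EuclideanSpace ℝ (Fin n)) : ℝ :=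
  ∑ i : Fin n,
    fderiv ℝ (fun y => fderiv ℝ ψ y (EuclideanSpace.single i (1:ℝ))) x
      (EuclideanSpace.single i (1:ℝ))

/-- `Ω` is a nodal domain of `ψ`: a connected component of `{ψ ≠ 0}`. -/
def IsNodalDomain {n : ℕ} (ψ : EuclideanSpace ℝ (Fin n) → ℝ)
    (Ω : Set (EuclideanSpace ℝ (Fin n))) : Prop :=
  ∃ x, ψ x ≠ 0 ∧ Ω = connectedComponentIn {y | ψ y ≠ 0} x

/-- The inner radius of a set: the supremum of radii of open balls contained in it. -/
def innerRadius {n : ℕ} (Ω : Set (EuclideanSpace ℝ (Fin n))) : ℝ :=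
  sSup {ρ : ℝ | 0 < ρ ∧ ∃ c, Metric.ball c ρ ⊆ Ω}

/-- The fundamental domain `[0,1)ⁿ` of the torus `ℝⁿ/ℤⁿ`. -/
def fundDom (n : ℕ) : Set (EuclideanSpace ℝ (Fin n)) :=
  {x | ∀ i, x i ∈ Set.Ico (0:ℝ) 1}

/-- `S ⊆ ℕ` has full density: `#(S ∩ [1,N]) / N → 1`. -/
def FullDensity (S : Set ℕ) : Prop :=
  Filter.Tendsto (fun N => (Nat.card ↥(S ∩ Set.Icc 1 N) : ℝ) / N) Filter.atTop (nhds 1)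

abbrev EE (n : ℕ) := EuclideanSpace ℝ (Fin n)

def PerC {n : ℕ} (F : EE n → ℂ) : Prop :=
  ∀ (x : EE n) (v : Fin n → ℤ), F (x + WithLp.toLp 2 (fun i => (v i : ℝ))) = F x

def tl {n : ℕ} (F : EE n → ℂ) (θ : UnitAddTorus (Fin n)) : ℂ :=
  F (WithLp.toLp 2 fun i => Quotient.out (θ i))

def mkT {n : ℕ} (x : EE n) : UnitAddTorus (Fin n) := fun i => (x i : UnitAddCircle)

lemma tl_mk {n : ℕ} {F : EE n → ℂ} (hF : PerC F) (x : EE n) : tl F (mkT x) = F x := by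
  have h : ∀ i, ∃ m : ℤ, Quotient.out (mkT x i) = x i + m := by
    intro i
    have h1 : ((Quotient.out (mkT x i) : ℝ) : UnitAddCircle) = (x i : UnitAddCircle) :=
      Quotient.out_eq (mkT x i)
    rw [← sub_eq_zero, ← AddCircle.coe_sub, AddCircle.coe_eq_zero_iff] at h1
    obtain ⟨m, hm⟩ := h1
    refine ⟨m, ?_⟩
    have : (m : ℝ) = m • (1:ℝ) := by simp
    rw [this, hm]; ring
  choose m hm using h
  unfold tl
  rw [← hF x m]
  congr 1
  ext i
  simp [hm]

lemma mkT_surj {n : ℕ} (θ : UnitAddTorus (Fin n)) :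
    mkT (WithLp.toLp 2 fun i => Quotient.out (θ i) : EE n) = θ := by
  funext i
  exact Quotient.out_eq (θ i)

lemma mkT_add {n : ℕ} (x y : EE n) : mkT (x + y) = mkT x + mkT y := by
  funext i
  simp [mkT]

lemma mkT_neg {n : ℕ} (x : EE n) : mkT (-x) = -mkT x := by
  funext i
  simp [mkT]

lemma mkT_quot {n : ℕ} : IsOpenQuotientMap (mkT (n := n)) := by
  have h1 : IsOpenQuotientMap (Pi.map (fun (_ : Fin n) (y : ℝ) => (y : UnitAddCircle))) :=
    IsOpenQuotientMap.piMap (fun _ => QuotientAddGroup.isOpenQuotientMap_mk)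
  exact h1.comp (EuclideanSpace.equiv (Fin n) ℝ).toHomeomorph.isOpenQuotientMap

lemma tl_cont {n : ℕ} {F : EE n → ℂ} (hF : PerC F) (hc : Continuous F) : Continuous (tl F) := by
  rw [← mkT_quot.continuous_comp_iff]
  have : tl F ∘ mkT = F := by
    funext x; exact tl_mk hF x
  rw [this]; exact hc

lemma tl_add {n : ℕ} {F : EE n → ℂ} (hF : PerC F) (θ : UnitAddTorus (Fin n)) (y : EE n) :
    tl F (θ + mkT y) = F ((WithLp.toLp 2 fun i => Quotient.out (θ i)) + y) := by
  conv_lhs => rw [← mkT_surj θ, ← mkT_add, tl_mk hF]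

lemma mF_mk {n : ℕ} (ξ : Fin n → ℤ) (x : EE n) :
    UnitAddTorus.mFourier ξ (mkT x) = Complex.exp (2 * π * Complex.I * ∑ i, (ξ i : ℂ) * (x i : ℂ)) := by
  unfold UnitAddTorus.mFourier mkT
  simp only [ContinuousMap.coe_mk, fourier_coe_apply]
  rw [← Complex.exp_sum, Finset.mul_sum]
  congr 1
  apply Finset.sum_congr rfl
  intro i _
  simp
  ring

lemma mF_add {n : ℕ} (ξ : Fin n → ℤ) (a b : UnitAddTorus (Fin n)) :
    UnitAddTorus.mFourier ξ (a + b) = UnitAddTorus.mFourier ξ a * UnitAddTorus.mFourier ξ b := by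
  rw [← mkT_surj a, ← mkT_surj b, ← mkT_add, mF_mk, mF_mk, mF_mk, ← Complex.exp_add]
  congr 1
  rw [← mul_add, ← Finset.sum_add_distrib]
  congr 1
  apply Finset.sum_congr rfl
  intro i _
  simp
  ring

def muT (n : ℕ) : Measure (UnitAddTorus (Fin n)) :=
  Measure.pi (fun _ : Fin n => AddCircle.haarAddCircle (T:=1))

instance (n : ℕ) : (muT n).IsAddLeftInvariant := by unfold muT; infer_instance
instance (n : ℕ) : IsProbabilityMeasure (muT n) := by unfold muT; infer_instance

lemma coeff_def {n : ℕ} (f : UnitAddTorus (Fin n) → ℂ) (ξ : Fin n → ℤ) :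
    UnitAddTorus.mFourierCoeff f ξ = ∫ t, UnitAddTorus.mFourier (-ξ) t * f t ∂(muT n) := rfl

lemma perC_deriv {n : ℕ} {F : EE n → ℂ} (hF : PerC F) (e : EE n) :
    PerC (fun y => fderiv ℝ F y e) := by
  intro x v
  have h : (fun y => F (y + WithLp.toLp 2 (fun i => (v i : ℝ)))) = F := by
    funext y; exact hF y v
  show fderiv ℝ F _ e = fderiv ℝ F x e
  rw [← fderiv_comp_add_right (f := F) (x := x) (WithLp.toLp 2 (fun i => (v i : ℝ))), h]

lemma coeff_deriv {n : ℕ} {F : EE n → ℂ} (hF : PerC F) (hc : ContDiff ℝ 1 F) (ξ : Fin n → ℤ)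
    (i : Fin n) :
    UnitAddTorus.mFourierCoeff (tl (fun y => fderiv ℝ F y (EuclideanSpace.single i (1:ℝ)))) ξ
      = 2 * π * Complex.I * ξ i * UnitAddTorus.mFourierCoeff (tl F) ξ := by
  set e : EE n := EuclideanSpace.single i (1:ℝ) with he
  set F' : EE n → ℂ := fun y => fderiv ℝ F y e with hF'
  have hP' : PerC F' := perC_deriv hF e
  have hcF : Continuous F := hc.continuous
  have hcF' : Continuous F' := (hc.continuous_fderiv (by norm_num)).clm_apply continuous_const
  have ht : Continuous (tl F) := tl_cont hF hcF
  have ht' : Continuous (tl F') := tl_cont hP' hcF'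
  obtain ⟨C, hC⟩ : ∃ C, ∀ θ, ‖tl F' θ‖ ≤ C := by
    obtain ⟨C, hC⟩ := isCompact_univ.exists_bound_of_continuousOn (f := tl F') ht'.continuousOn
    exact ⟨C, fun θ => hC θ trivial⟩
  have hmF : Continuous (fun t => UnitAddTorus.mFourier (-ξ) t) :=
    (UnitAddTorus.mFourier (-ξ)).continuous
  have hmFn : ∀ t, ‖UnitAddTorus.mFourier (-ξ) t‖ ≤ 1 := fun t =>
    ((UnitAddTorus.mFourier (-ξ)).norm_coe_le_norm t).trans UnitAddTorus.mFourier_norm.le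
  have hint : ∀ g : UnitAddTorus (Fin n) → ℂ, Continuous g → Integrable g (muT n) := by
    intro g hg
    have := hg.continuousOn.integrableOn_compact (μ := muT n) isCompact_univ
    simpa using this
  have hD := hasDerivAt_integral_of_dominated_loc_of_deriv_le (μ := muT n) (𝕜 := ℝ)
    (F := fun h t => UnitAddTorus.mFourier (-ξ) t * tl F (t + mkT (h • e)))
    (F' := fun h t => UnitAddTorus.mFourier (-ξ) t * tl F' (t + mkT (h • e)))
    (x₀ := (0:ℝ)) (s := Set.univ) (bound := fun _ => C) univ_mem
    (Eventually.of_forall fun h => (hint _ (by fun_prop)).aestronglyMeasurable)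
    (hint _ (by fun_prop)) (hint _ (by fun_prop)).aestronglyMeasurable
    (Eventually.of_forall fun t h _ => by
      rw [norm_mul]
      calc _ ≤ 1 * ‖tl F' (t + mkT (h • e))‖ := by gcongr; exact hmFn t
        _ ≤ C := by rw [one_mul]; exact hC _)
    (integrable_const _)
    (Eventually.of_forall fun t h _ => by
      simp only [tl_add hF, tl_add hP']
      apply HasDerivAt.const_mul
      have h1 : HasDerivAt (fun h : ℝ => (WithLp.toLp 2 fun i => Quotient.out (t i) : EE n) + h • e) e h := by
        simpa using ((hasDerivAt_id h).smul_const e).const_add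
          (WithLp.toLp 2 fun i => Quotient.out (t i) : EE n)
      exact ((hc.differentiable (by norm_num)) _).hasFDerivAt.comp_hasDerivAt h h1)
  have hD2 := hD.2
  have e0 : mkT ((0:ℝ) • e) = 0 := by
    funext j; simp [mkT]
  have key : ∀ h : ℝ, ∫ t, UnitAddTorus.mFourier (-ξ) t * tl F (t + mkT (h • e)) ∂(muT n)
      = Complex.exp (2 * π * Complex.I * ξ i * h) * UnitAddTorus.mFourierCoeff (tl F) ξ := by
    intro h
    rw [coeff_def, ← integral_const_mul]
    rw [← integral_add_right_eq_self (μ := muT n) (fun t => Complex.exp (2 * π * Complex.I * ξ i * h) *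
      (UnitAddTorus.mFourier (-ξ) t * tl F t)) (mkT (h • e))]
    apply integral_congr_ae
    refine Eventually.of_forall fun t => ?_
    simp only []
    rw [mF_add, ← mul_assoc, ← mul_assoc, mul_comm (Complex.exp _), mul_assoc (UnitAddTorus.mFourier _ _)]
    rw [mF_mk, ← Complex.exp_add]
    have : (2 * π * Complex.I * ∑ j, (((-ξ) j : ℤ) : ℂ) * (((h • e) j : ℝ) : ℂ)
      + 2 * π * Complex.I * ξ i * h) = 0 := by
      rw [Finset.sum_eq_single i]
      · simp [he]; ring
      · intro j _ hj; simp [he, hj]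
      · simp
    rw [add_comm (2 * π * Complex.I * ξ i * h : ℂ), this]; simp
  simp only [key, e0, add_zero] at hD2
  have hD3 : HasDerivAt (fun h : ℝ => Complex.exp (2 * π * Complex.I * ξ i * h) * UnitAddTorus.mFourierCoeff (tl F) ξ)
      (2 * π * Complex.I * ξ i * UnitAddTorus.mFourierCoeff (tl F) ξ) 0 := by
    apply HasDerivAt.mul_const
    have h1 : HasDerivAt (fun z : ℂ => Complex.exp (2 * π * Complex.I * ξ i * z)) (2 * π * Complex.I * ξ i) ((0:ℝ):ℂ) := by
      have := ((hasDerivAt_id ((0:ℝ):ℂ)).const_mul (2 * π * Complex.I * ξ i)).cexp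
      simpa using this
    exact h1.comp_ofReal
  rw [coeff_def]
  exact hD2.unique hD3


lemma fderiv_ofReal {n : ℕ} {g : EE n → ℝ} {y : EE n} (hg : DifferentiableAt ℝ g y) (e : EE n) :
    fderiv ℝ (fun z => (g z : ℂ)) y e = ((fderiv ℝ g y e : ℝ) : ℂ) := by
  have h := (Complex.ofRealCLM.hasFDerivAt (x := g y)).comp y hg.hasFDerivAt
  have h2 : HasFDerivAt (fun z => (g z : ℂ)) (Complex.ofRealCLM.comp (fderiv ℝ g y)) y := h
  rw [h2.fderiv]
  rfl

def lapSum (n : ℕ) (ψ : EuclideanSpace ℝ (Fin n) → ℝ) (x : EuclideanSpace ℝ (Fin n)) : ℝ :=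
  ∑ i : Fin n,
    fderiv ℝ (fun y => fderiv ℝ ψ y (EuclideanSpace.single i (1:ℝ))) x
      (EuclideanSpace.single i (1:ℝ))

def wv {n : ℕ} (ξ : Fin n → ℤ) : EE n := WithLp.toLp 2 (fun i => 2 * π * (ξ i : ℝ))

lemma trig_poly {n : ℕ} {ψ : EE n → ℝ} {lam : ℝ} (hψ : ContDiff ℝ (⊤ : ℕ∞) ψ)
    (hper : ∀ (x : EE n) (v : Fin n → ℤ),
      ψ (WithLp.toLp 2 fun i => x i + (v i : ℝ)) = ψ x)
    (hlap : ∀ x, lapSum n ψ x = -lam * ψ x) :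
    ∃ (S : Finset (Fin n → ℤ)) (a : (Fin n → ℤ) → ℂ), (∀ ξ ∈ S, ‖wv ξ‖ ^ 2 = lam) ∧
      ∀ x, (ψ x : ℂ) = ∑ ξ ∈ S, a ξ * Complex.exp (Complex.I * (inner ℝ (wv ξ) x : ℝ)) := by
  set F : EE n → ℂ := fun x => (ψ x : ℂ) with hFdef
  have hF : PerC F := by
    intro x v
    simp only [hFdef]
    rw [← hper x v]
    congr 2
  have hFs : ContDiff ℝ (⊤ : ℕ∞) F := Complex.ofRealCLM.contDiff.comp hψ
  have hd : ∀ (G : EE n → ℂ) (i : Fin n), ContDiff ℝ (⊤ : ℕ∞) G → ContDiff ℝ (⊤ : ℕ∞)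
      (fun y => fderiv ℝ G y (EuclideanSpace.single i (1:ℝ))) := by
    intro G i hG
    exact (hG.fderiv_right (m := (⊤ : ℕ∞)) (by norm_cast)).clm_apply contDiff_const
  have hdr : ∀ (G : EE n → ℝ) (i : Fin n), ContDiff ℝ (⊤ : ℕ∞) G → ContDiff ℝ (⊤ : ℕ∞)
      (fun y => fderiv ℝ G y (EuclideanSpace.single i (1:ℝ))) := by
    intro G i hG
    exact (hG.fderiv_right (m := (⊤ : ℕ∞)) (by norm_cast)).clm_apply contDiff_const
  have hlapF : ∀ x, ∑ i : Fin n, fderiv ℝ (fun y => fderiv ℝ F y (EuclideanSpace.single i (1:ℝ))) x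
      (EuclideanSpace.single i (1:ℝ)) = -lam * F x := by
    intro x
    have h1 := congrArg (fun z : ℝ => (z : ℂ)) (hlap x)
    simp only [lapSum, Complex.ofReal_sum] at h1
    simp only [hFdef]
    rw [show (-(lam:ℂ) * (ψ x : ℂ)) = ((-lam * ψ x : ℝ) : ℂ) by push_cast; ring, ← h1]
    apply Finset.sum_congr rfl
    intro i _
    have h2 : (fun y => fderiv ℝ (fun x => (ψ x : ℂ)) y (EuclideanSpace.single i (1:ℝ))) =
        fun y => ((fderiv ℝ ψ y (EuclideanSpace.single i (1:ℝ)) : ℝ) : ℂ) := by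
      funext y
      exact fderiv_ofReal ((hψ.differentiable (by simp)) y) _
    rw [h2]
    exact fderiv_ofReal (((hdr ψ i hψ).differentiable (by simp)) x) _
  have hco : ∀ ξ : Fin n → ℤ, UnitAddTorus.mFourierCoeff (tl F) ξ ≠ 0 → ‖wv ξ‖ ^ 2 = lam := by
    intro ξ hξ
    have hint : ∀ g : UnitAddTorus (Fin n) → ℂ, Continuous g → Integrable g (muT n) := by
      intro g hg
      have := hg.continuousOn.integrableOn_compact (μ := muT n) isCompact_univ
      simpa using this
    have h1 : ∑ i, UnitAddTorus.mFourierCoeff (tl (fun x => fderiv ℝ (fun y => fderiv ℝ F y (EuclideanSpace.single i (1:ℝ))) x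
      (EuclideanSpace.single i (1:ℝ)))) ξ = -lam * UnitAddTorus.mFourierCoeff (tl F) ξ := by
      simp only [coeff_def]
      rw [← integral_finsetSum, ← integral_const_mul]
      · apply integral_congr_ae
        refine Eventually.of_forall fun t => ?_
        simp only []
        rw [← Finset.mul_sum]
        have := hlapF (WithLp.toLp 2 fun i => Quotient.out (t i))
        unfold tl
        rw [this]; ring
      · intro i _
        apply hint
        apply (UnitAddTorus.mFourier (-ξ)).continuous.mul
        apply tl_cont
        · exact perC_deriv (perC_deriv hF _) _
        · exact (hd _ _ (hd _ _ hFs)).continuous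
    have h2 : ∀ i, UnitAddTorus.mFourierCoeff (tl (fun x => fderiv ℝ (fun y => fderiv ℝ F y (EuclideanSpace.single i (1:ℝ))) x
      (EuclideanSpace.single i (1:ℝ)))) ξ = -((2 * π * (ξ i : ℝ)) ^ 2 : ℝ) * UnitAddTorus.mFourierCoeff (tl F) ξ := by
      intro i
      rw [coeff_deriv (perC_deriv hF _) ((hd _ _ hFs).of_le (by norm_cast)),
        coeff_deriv hF (hFs.of_le (by norm_cast))]
      push_cast
      linear_combination (2 * π * ξ i : ℂ)^2 * UnitAddTorus.mFourierCoeff (tl F) ξ * Complex.I_sq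
    simp only [h2] at h1
    rw [← Finset.sum_mul] at h1
    have h3 := mul_right_cancel₀ hξ h1
    rw [EuclideanSpace.norm_sq_eq]
    rw [Finset.sum_neg_distrib, neg_inj] at h3
    have h4 : (∑ i, (2 * π * (ξ i : ℝ)) ^ 2 : ℝ) = lam := by exact_mod_cast h3
    rw [← h4]
    apply Finset.sum_congr rfl
    intro i _
    simp only [wv, Real.norm_eq_abs, sq_abs]
  classical
  set S : Finset (Fin n → ℤ) := (Finset.Icc (fun _ => -⌈lam⌉) (fun _ => ⌈lam⌉)).filter
    (fun ξ => ‖wv ξ‖ ^ 2 = lam) with hS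
  have hbd : ∀ ξ : Fin n → ℤ, ‖wv ξ‖ ^ 2 = lam → ξ ∈ S := by
    intro ξ hξ
    rw [hS, Finset.mem_filter]
    refine ⟨?_, hξ⟩
    have hi : ∀ i, (|ξ i| : ℤ) ≤ ⌈lam⌉ := by
      intro i
      have h1 : ((ξ i : ℝ)) ^ 2 ≤ lam := by
        rw [← hξ, EuclideanSpace.norm_sq_eq]
        calc ((ξ i : ℝ)) ^ 2 ≤ ‖(wv ξ) i‖ ^ 2 := by
              simp only [wv, Real.norm_eq_abs, sq_abs]
              have : 1 ≤ (2 * π) ^ 2 := by nlinarith [Real.pi_gt_three]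
              nlinarith [sq_nonneg (ξ i : ℝ)]
          _ ≤ _ := Finset.single_le_sum (f := fun i => ‖(wv ξ) i‖ ^ 2)
              (fun _ _ => sq_nonneg _) (Finset.mem_univ i)
      have h2 : |ξ i| ≤ (ξ i)^2 := by
        rw [← sq_abs]
        rcases eq_or_ne (|ξ i|) 0 with h | h
        · rw [h]; norm_num
        · have : 1 ≤ |ξ i| := by have := abs_nonneg (ξ i); omega
          nlinarith
      have h3 : ((|ξ i| : ℤ) : ℝ) ≤ ⌈lam⌉ := by
        calc ((|ξ i| : ℤ) : ℝ) ≤ (((ξ i)^2 : ℤ) : ℝ) := by exact_mod_cast h2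
          _ ≤ lam := by push_cast; exact h1
          _ ≤ _ := Int.le_ceil _
      exact_mod_cast h3
    rw [Finset.mem_Icc]
    exact ⟨fun i => (abs_le.mp (hi i)).1, fun i => (abs_le.mp (hi i)).2⟩
  refine ⟨S, UnitAddTorus.mFourierCoeff (tl F), fun ξ hξ => (Finset.mem_filter.mp hξ).2, ?_⟩
  intro x
  have hz : ∀ ξ ∉ S, UnitAddTorus.mFourierCoeff (tl F) ξ = 0 := by
    intro ξ hξ
    by_contra h
    exact hξ (hbd ξ (hco ξ h))
  let f : C(UnitAddTorus (Fin n), ℂ) := ⟨tl F, tl_cont hF hFs.continuous⟩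
  have hs : Summable (UnitAddTorus.mFourierCoeff f) :=
    summable_of_ne_finset_zero (s := S) hz
  have h1 := UnitAddTorus.hasSum_mFourier_series_apply_of_summable hs (mkT x)
  have h2 : HasSum (fun ξ => UnitAddTorus.mFourierCoeff f ξ • UnitAddTorus.mFourier ξ (mkT x))
      (∑ ξ ∈ S, UnitAddTorus.mFourierCoeff f ξ • UnitAddTorus.mFourier ξ (mkT x)) := by
    apply hasSum_sum_of_ne_finset_zero
    intro ξ hξ
    have : UnitAddTorus.mFourierCoeff f ξ = 0 := hz ξ hξ
    rw [this, zero_smul]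
  have h3 := h1.unique h2
  have h4 : f (mkT x) = F x := tl_mk hF x
  rw [h4] at h3
  show F x = _
  rw [h3]
  apply Finset.sum_congr rfl
  intro ξ _
  rw [smul_eq_mul, mF_mk]
  congr 2
  rw [PiLp.inner_apply, Complex.ofReal_sum, Finset.mul_sum, Finset.mul_sum]
  apply Finset.sum_congr rfl
  intro i _
  simp [wv]
  ring

def gg {n : ℕ} (ψ : EE n → ℝ) (x : EE n) (t : ℝ) : ℝ :=
  (2 * π * t) ^ (-(n / 2 : ℝ)) * ∫ y, ψ (x + y) ^ 2 * rexp (-(1 / (2 * t)) * ‖y‖ ^ 2)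

def cc {n : ℕ} {ι : Type*} (a : ι → ℂ) (w : ι → EE n) (x : EE n) (ξ : ι) : ℂ :=
  a ξ * Complex.exp (Complex.I * (inner ℝ (w ξ) x : ℝ))

lemma gg_formula {n : ℕ} {ι : Type*} {ψ : EE n → ℝ} {lam : ℝ} (S : Finset ι) (a : ι → ℂ)
    (w : ι → EE n) (hw : ∀ ξ ∈ S, ‖w ξ‖ ^ 2 = lam)
    (hψ : ∀ x, (ψ x : ℂ) = ∑ ξ ∈ S, a ξ * Complex.exp (Complex.I * (inner ℝ (w ξ) x : ℝ)))
    (x : EE n) (t : ℝ) (ht : 0 < t) :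
    ((rexp (lam * t) * gg ψ x t : ℝ) : ℂ) = ∑ ξ ∈ S, ∑ η ∈ S, cc a w x ξ *
      (starRingEnd ℂ) (cc a w x η) * Complex.exp (t * (inner ℝ (w ξ) (w η) : ℝ)) := by
  have hb : 0 < ((1 / (2 * t) : ℝ) : ℂ).re := by
    rw [Complex.ofReal_re]; positivity
  have h1 : ∀ y, ((ψ (x + y) ^ 2 * rexp (-(1 / (2 * t)) * ‖y‖ ^ 2) : ℝ) : ℂ) =
      ∑ ξ ∈ S, ∑ η ∈ S, cc a w x ξ * (starRingEnd ℂ) (cc a w x η) *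
        Complex.exp (-((1 / (2 * t) : ℝ) : ℂ) * (‖y‖ : ℂ) ^ 2 + Complex.I * (inner ℝ (w ξ - w η) y : ℝ)) := by
    intro y
    have e1 : (ψ (x + y) : ℂ) = ∑ ξ ∈ S, cc a w x ξ * Complex.exp (Complex.I * (inner ℝ (w ξ) y : ℝ)) := by
      rw [hψ]
      apply Finset.sum_congr rfl
      intro ξ _
      rw [cc, inner_add_right, Complex.ofReal_add, mul_add, Complex.exp_add, mul_assoc]
    have e2 : (ψ (x + y) : ℂ) = ∑ ξ ∈ S, (starRingEnd ℂ) (cc a w x ξ) * Complex.exp (-(Complex.I * (inner ℝ (w ξ) y : ℝ))) := by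
      rw [← Complex.conj_ofReal, e1, map_sum]
      apply Finset.sum_congr rfl
      intro ξ _
      rw [map_mul, ← Complex.exp_conj]
      congr 2
      simp
    rw [Complex.ofReal_mul, Complex.ofReal_pow, sq]
    conv_lhs => enter [1, 1]; rw [e1]
    conv_lhs => enter [1, 2]; rw [e2]
    rw [Finset.sum_mul_sum, Finset.sum_mul]
    apply Finset.sum_congr rfl
    intro ξ _
    rw [Finset.sum_mul]
    apply Finset.sum_congr rfl
    intro η _
    rw [inner_sub_left, Complex.ofReal_sub, mul_sub, sub_eq_add_neg, Complex.exp_add, Complex.exp_add,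
      Complex.ofReal_exp]
    push_cast
    ring
  have h2 : ((∫ y, ψ (x + y) ^ 2 * rexp (-(1 / (2 * t)) * ‖y‖ ^ 2) : ℝ) : ℂ) =
      ∑ ξ ∈ S, ∑ η ∈ S, cc a w x ξ * (starRingEnd ℂ) (cc a w x η) *
        (((2 * π * t) ^ (n / 2 : ℝ) : ℝ) * Complex.exp (-(t / 2 * ‖w ξ - w η‖ ^ 2 : ℝ))) := by
    rw [← integral_complex_ofReal]
    simp_rw [h1]
    have hI : ∀ ξ η, Integrable (fun y : EE n => cc a w x ξ * (starRingEnd ℂ) (cc a w x η) *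
        Complex.exp (-((1 / (2 * t) : ℝ) : ℂ) * (‖y‖ : ℂ) ^ 2 + Complex.I * (inner ℝ (w ξ - w η) y : ℝ))) := by
      intro ξ η
      apply Integrable.const_mul
      exact GaussianFourier.integrable_cexp_neg_mul_sq_norm_add hb Complex.I (w ξ - w η)
    rw [integral_finsetSum _ (fun ξ _ => integrable_finsetSum _ (fun η _ => hI ξ η))]
    apply Finset.sum_congr rfl
    intro ξ _
    rw [integral_finsetSum _ (fun η _ => hI ξ η)]
    apply Finset.sum_congr rfl
    intro η _
    rw [integral_const_mul, GaussianFourier.integral_cexp_neg_mul_sq_norm_add hb]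
    congr 2
    · rw [Complex.ofReal_cpow (by positivity)]
      congr 1
      · push_cast; field_simp
      · simp
    · congr 1
      rw [Complex.I_sq]
      push_cast
      field_simp
      ring
  rw [gg, Complex.ofReal_mul, Complex.ofReal_mul, h2, Finset.mul_sum, Finset.mul_sum]
  apply Finset.sum_congr rfl
  intro ξ hξ
  rw [Finset.mul_sum, Finset.mul_sum]
  apply Finset.sum_congr rfl
  intro η hη
  have e3 : (((2 * π * t) ^ (-(n / 2 : ℝ)) : ℝ) : ℂ) * (((2 * π * t) ^ (n / 2 : ℝ) : ℝ) : ℂ) = 1 := by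
    rw [← Complex.ofReal_mul, ← Real.rpow_add (by positivity)]
    simp
  have e4 : (rexp (lam * t) : ℂ) * Complex.exp (-(t / 2 * ‖w ξ - w η‖ ^ 2 : ℝ)) =
      Complex.exp (t * (inner ℝ (w ξ) (w η) : ℝ)) := by
    rw [Complex.ofReal_exp, ← Complex.exp_add, norm_sub_sq_real, hw ξ hξ, hw η hη]
    congr 1
    push_cast
    ring
  rw [← e4]
  linear_combination (cc a w x ξ * (starRingEnd ℂ) (cc a w x η) * (rexp (lam * t) : ℂ) * Complex.exp (-(t / 2 * ‖w ξ - w η‖ ^ 2 : ℝ))) * e3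

lemma inner_pow {n : ℕ} (u v : EE n) (k : ℕ) :
    (inner ℝ u v) ^ k = ∑ f : Fin k → Fin n, (∏ j, u (f j)) * (∏ j, v (f j)) := by
  have h1 : (inner ℝ u v : ℝ) = ∑ i, u i * v i := by
    rw [PiLp.inner_apply]
    apply Finset.sum_congr rfl
    intro i _
    simp [mul_comm]
  have h2 : (inner ℝ u v : ℝ) ^ k = ∏ _j : Fin k, ∑ i, u i * v i := by
    rw [Finset.prod_const, h1]; simp
  rw [h2, Finset.prod_univ_sum]
  simp [Finset.prod_mul_distrib]

lemma gg_series {n : ℕ} {ι : Type*} {ψ : EE n → ℝ} {lam : ℝ} (S : Finset ι) (a : ι → ℂ)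
    (w : ι → EE n) (hw : ∀ ξ ∈ S, ‖w ξ‖ ^ 2 = lam)
    (hψ : ∀ x, (ψ x : ℂ) = ∑ ξ ∈ S, a ξ * Complex.exp (Complex.I * (inner ℝ (w ξ) x : ℝ)))
    (x : EE n) :
    ∃ Q : ℕ → ℝ, (∀ k, 0 ≤ Q k) ∧ Q 0 = ψ x ^ 2 ∧
      ∀ t, 0 < t → HasSum (fun k => Q k * t ^ k) (rexp (lam * t) * gg ψ x t) := by
  set R : ℕ → ℝ := fun k => ∑ f : Fin k → Fin n,
    ‖∑ ξ ∈ S, cc a w x ξ * ((∏ j, w ξ (f j) : ℝ) : ℂ)‖ ^ 2 with hR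
  have hRc : ∀ k, (R k : ℂ) = ∑ ξ ∈ S, ∑ η ∈ S, cc a w x ξ *
      (starRingEnd ℂ) (cc a w x η) * ((inner ℝ (w ξ) (w η) : ℝ) : ℂ) ^ k := by
    intro k
    simp only [hR]
    rw [Complex.ofReal_sum]
    have : ∀ f : Fin k → Fin n, ((‖∑ ξ ∈ S, cc a w x ξ * ((∏ j, w ξ (f j) : ℝ) : ℂ)‖ ^ 2 : ℝ) : ℂ) =
        ∑ ξ ∈ S, ∑ η ∈ S, cc a w x ξ * (starRingEnd ℂ) (cc a w x η) *
          (((∏ j, w ξ (f j)) * (∏ j, w η (f j)) : ℝ) : ℂ) := by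
      intro f
      rw [Complex.ofReal_pow, ← Complex.mul_conj', map_sum, Finset.sum_mul_sum]
      apply Finset.sum_congr rfl
      intro ξ _
      apply Finset.sum_congr rfl
      intro η _
      rw [map_mul, Complex.conj_ofReal, Complex.ofReal_mul]
      ring
    simp_rw [this]
    rw [Finset.sum_comm]
    apply Finset.sum_congr rfl
    intro ξ _
    rw [Finset.sum_comm]
    apply Finset.sum_congr rfl
    intro η _
    rw [← Finset.mul_sum, ← Complex.ofReal_sum, ← inner_pow, Complex.ofReal_pow]
  refine ⟨fun k => R k / k.factorial, fun k => ?_, ?_, ?_⟩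
  · have : 0 ≤ R k := Finset.sum_nonneg fun _ _ => by positivity
    positivity
  · simp only [hR]
    simp only [Finset.univ_unique, Finset.sum_singleton, Finset.univ_eq_empty, Finset.prod_empty,
      Complex.ofReal_one, mul_one, Nat.factorial_zero, Nat.cast_one, div_one]
    have : ∑ ξ ∈ S, cc a w x ξ = (ψ x : ℂ) := (hψ x).symm
    rw [this]
    simp
  · intro t ht
    rw [← Complex.hasSum_ofReal, gg_formula S a w hw hψ x t ht]
    have h1 : HasSum (fun k : ℕ => ∑ ξ ∈ S, ∑ η ∈ S, cc a w x ξ *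
      (starRingEnd ℂ) (cc a w x η) * (((t * (inner ℝ (w ξ) (w η) : ℝ) : ℂ) ^ k) / k.factorial))
      (∑ ξ ∈ S, ∑ η ∈ S, cc a w x ξ *
      (starRingEnd ℂ) (cc a w x η) * Complex.exp (t * (inner ℝ (w ξ) (w η) : ℝ))) := by
      apply hasSum_sum
      intro ξ _
      apply hasSum_sum
      intro η _
      apply HasSum.mul_left
      rw [Complex.exp_eq_exp_ℂ]
      exact NormedSpace.expSeries_div_hasSum_exp _
    convert h1 using 1
    funext k
    push_cast
    rw [hRc, div_mul_eq_mul_div, Finset.sum_mul, Finset.sum_div]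
    apply Finset.sum_congr rfl
    intro ξ _
    rw [Finset.sum_mul, Finset.sum_div]
    apply Finset.sum_congr rfl
    intro η _
    rw [mul_pow]
    ring

lemma cheb_fin (Q : ℕ → ℝ) (hQ : ∀ k, 0 ≤ Q k) (t T : ℝ) (ht : 0 < t) (hT : t ≤ T) (m : ℕ) :
    (∑ k ∈ Finset.range m, Q k * (2 * t) ^ k) * (∑ k ∈ Finset.range m, Q k * T ^ k) ≤
    (∑ k ∈ Finset.range m, Q k * t ^ k) * (∑ k ∈ Finset.range m, Q k * (2 * T) ^ k) := by
  have h : 0 ≤ ∑ j ∈ Finset.range m, ∑ k ∈ Finset.range m,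
      Q j * Q k * (((2:ℝ) ^ k - 2 ^ j) * (t ^ j * T ^ k - t ^ k * T ^ j)) := by
    apply Finset.sum_nonneg; intro j _
    apply Finset.sum_nonneg; intro k _
    apply mul_nonneg (mul_nonneg (hQ j) (hQ k))
    have key : ∀ j k : ℕ, j ≤ k → 0 ≤ ((2:ℝ) ^ k - 2 ^ j) ∧ 0 ≤ (t ^ j * T ^ k - t ^ k * T ^ j) := by
      intro j k hjk
      constructor
      · rw [sub_nonneg]; exact pow_le_pow_right₀ (by norm_num) hjk
      · obtain ⟨d, rfl⟩ := Nat.exists_eq_add_of_le hjk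
        rw [sub_nonneg, pow_add, pow_add]
        have : t ^ d ≤ T ^ d := pow_le_pow_left₀ ht.le hT d
        have hp : 0 ≤ t ^ j * T ^ j := by have := ht.trans_le hT; positivity
        nlinarith
    rcases le_total j k with hjk | hjk
    · exact mul_nonneg (key j k hjk).1 (key j k hjk).2
    · have := key k j hjk
      nlinarith [mul_nonneg this.1 this.2]
  have e : ∑ j ∈ Finset.range m, ∑ k ∈ Finset.range m,
      Q j * Q k * (((2:ℝ) ^ k - 2 ^ j) * (t ^ j * T ^ k - t ^ k * T ^ j)) =
      2 * ((∑ k ∈ Finset.range m, Q k * t ^ k) * (∑ k ∈ Finset.range m, Q k * (2 * T) ^ k) -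
      (∑ k ∈ Finset.range m, Q k * (2 * t) ^ k) * (∑ k ∈ Finset.range m, Q k * T ^ k)) := by
    rw [two_mul]
    nth_rewrite 2 [mul_comm (∑ k ∈ Finset.range m, Q k * t ^ k)]
    nth_rewrite 2 [mul_comm (∑ k ∈ Finset.range m, Q k * (2 * t) ^ k)]
    simp only [Finset.sum_mul_sum]
    rw [← Finset.sum_sub_distrib, ← Finset.sum_sub_distrib, ← Finset.sum_add_distrib]
    apply Finset.sum_congr rfl; intro j _
    rw [← Finset.sum_sub_distrib, ← Finset.sum_sub_distrib, ← Finset.sum_add_distrib]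
    apply Finset.sum_congr rfl; intro k _
    simp only [mul_pow]
    ring
  linarith [e ▸ h]

lemma cheb (Q : ℕ → ℝ) (hQ : ∀ k, 0 ≤ Q k) (t T : ℝ) (ht : 0 < t) (hT : t ≤ T) (H : ℝ → ℝ)
    (hH : ∀ t, 0 < t → HasSum (fun k => Q k * t ^ k) (H t)) :
    H (2 * t) * H T ≤ H t * H (2 * T) := by
  have hT0 : 0 < T := ht.trans_le hT
  refine le_of_tendsto_of_tendsto'
    ((hH (2 * t) (by positivity)).tendsto_sum_nat.mul (hH T hT0).tendsto_sum_nat)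
    ((hH t ht).tendsto_sum_nat.mul (hH (2 * T) (by positivity)).tendsto_sum_nat)
    (fun m => cheb_fin Q hQ t T ht hT m)

lemma gg_eq {n : ℕ} (ψ : EE n → ℝ) (x : EE n) (t : ℝ) :
    gg ψ x t = (2 * π * t) ^ (-(n / 2 : ℝ)) * ∫ z, ψ z ^ 2 * rexp (-(1 / (2 * t)) * ‖z - x‖ ^ 2) := by
  rw [gg, ← integral_add_left_eq_self (fun z => ψ z ^ 2 * rexp (-(1 / (2 * t)) * ‖z - x‖ ^ 2)) x]
  simp

lemma int_gauss {n : ℕ} (x : EE n) (t : ℝ) (ht : 0 < t) :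
    ∫ z : EE n, rexp (-(1 / (2 * t)) * ‖z - x‖ ^ 2) = (2 * π * t) ^ (n / 2 : ℝ) := by
  rw [integral_sub_right_eq_self (fun z : EE n => rexp (-(1 / (2 * t)) * ‖z‖ ^ 2)) x,
    GaussianFourier.integral_rexp_neg_mul_sq_norm (by positivity)]
  congr 1
  · field_simp
  · simp

lemma integrable_gauss {n : ℕ} (x : EE n) (t : ℝ) (ht : 0 < t) :
    Integrable (fun z : EE n => rexp (-(1 / (2 * t)) * ‖z - x‖ ^ 2)) := by
  by_contra h
  have h1 := int_gauss x t ht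
  rw [integral_undef h] at h1
  have : 0 < (2 * π * t) ^ (n / 2 : ℝ) := by positivity
  linarith

lemma integrable_psi {n : ℕ} {ψ : EE n → ℝ} (hc : Continuous ψ) {P : ℝ} (hP : ∀ y, ψ y ^ 2 ≤ P)
    (x : EE n) (t : ℝ) (ht : 0 < t) :
    Integrable (fun z : EE n => ψ z ^ 2 * rexp (-(1 / (2 * t)) * ‖z - x‖ ^ 2)) := by
  apply (integrable_gauss x t ht).bdd_mul (c := P) (by fun_prop)
  refine Eventually.of_forall fun z => ?_
  rw [Real.norm_eq_abs, abs_of_nonneg (sq_nonneg _)]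
  exact hP z

lemma norm_const {t : ℝ} (ht : 0 < t) (n : ℕ) :
    (2 * π * t) ^ (-(n / 2 : ℝ)) = 2 ^ (n / 2 : ℝ) * (2 * π * (2 * t)) ^ (-(n / 2 : ℝ)) := by
  rw [show 2 * π * (2 * t) = 2 * (2 * π * t) by ring, Real.mul_rpow (x := 2) (by norm_num) (by positivity),
    ← mul_assoc, ← Real.rpow_add (by norm_num)]
  simp

lemma norm_gauss {t : ℝ} (ht : 0 < t) {n : ℕ} (x : EE n) :
    (2 * π * t) ^ (-(n / 2 : ℝ)) * ∫ z : EE n, rexp (-(1 / (2 * t)) * ‖z - x‖ ^ 2) = 1 := by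
  rw [int_gauss x t ht, ← Real.rpow_add (by positivity)]
  simp

lemma gg_le_sup {n : ℕ} {ψ : EE n → ℝ} (hc : Continuous ψ) {P : ℝ} (hP : ∀ y, ψ y ^ 2 ≤ P)
    (x : EE n) (t : ℝ) (ht : 0 < t) : gg ψ x t ≤ P := by
  rw [gg_eq]
  calc _ ≤ (2 * π * t) ^ (-(n / 2 : ℝ)) * ∫ z : EE n, P * rexp (-(1 / (2 * t)) * ‖z - x‖ ^ 2) := by
        gcongr
        · exact integrable_psi hc hP x t ht
        · exact (integrable_gauss x t ht).const_mul P
        · intro z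
          simp only []
          gcongr
          exact hP z
    _ = P := by
        rw [integral_const_mul, mul_left_comm, norm_gauss ht, mul_one]

lemma gg_shift {n : ℕ} {ψ : EE n → ℝ} (hc : Continuous ψ) {P : ℝ} (hP : ∀ y, ψ y ^ 2 ≤ P)
    (x y : EE n) (ρ : ℝ) (hρ : ‖y - x‖ ≤ ρ) (t : ℝ) (ht : 0 < t) :
    gg ψ y t ≤ 2 ^ (n / 2 : ℝ) * rexp (ρ ^ 2 / (2 * t)) * gg ψ x (2 * t) := by
  rw [gg_eq, gg_eq, norm_const ht]
  have : ∫ z, ψ z ^ 2 * rexp (-(1 / (2 * t)) * ‖z - y‖ ^ 2) ≤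
      ∫ z, rexp (ρ ^ 2 / (2 * t)) * (ψ z ^ 2 * rexp (-(1 / (2 * (2 * t))) * ‖z - x‖ ^ 2)) := by
    apply integral_mono (integrable_psi hc hP y t ht)
      ((integrable_psi hc hP x (2 * t) (by positivity)).const_mul _)
    intro z
    simp only []
    rw [mul_left_comm, ← Real.exp_add]
    gcongr
    have h1 : ‖z - x‖ ^ 2 ≤ 2 * ‖z - y‖ ^ 2 + 2 * ρ ^ 2 := by
      have h2 : ‖z - x‖ ≤ ‖z - y‖ + ρ := by
        calc ‖z - x‖ = ‖(z - y) + (y - x)‖ := by congr 1; abel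
          _ ≤ _ := (norm_add_le _ _).trans (by gcongr)
      have h3 := norm_nonneg (z - x)
      nlinarith [sq_nonneg (‖z - y‖ - ρ)]
    have : -(1 / (2 * t)) * ‖z - y‖ ^ 2 = (-2 * ‖z - y‖ ^ 2) / (4 * t) := by field_simp; ring
    rw [this]
    have : ρ ^ 2 / (2 * t) + -(1 / (2 * (2 * t))) * ‖z - x‖ ^ 2 = (2 * ρ ^ 2 - ‖z - x‖ ^ 2) / (4 * t) := by
      field_simp; ring
    rw [this]
    gcongr
    linarith
  rw [integral_const_mul] at this
  calc _ ≤ _ := mul_le_mul_of_nonneg_left this (by positivity)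
    _ = _ := by ring

lemma exp_split {t s d : ℝ} (ht : 0 < t) (hs : s ^ 2 ≤ d) :
    rexp (-(1 / (2 * t)) * d) ≤ rexp (-(s ^ 2 / (4 * t))) * rexp (-(1 / (2 * (2 * t))) * d) := by
  rw [← Real.exp_add]
  apply Real.exp_le_exp.mpr
  have h1 : -(1 / (2 * t)) * d = (-2 * d) / (4 * t) := by field_simp; ring
  have h2 : -(s ^ 2 / (4 * t)) + -(1 / (2 * (2 * t))) * d = (-(s ^ 2) - d) / (4 * t) := by
    field_simp; ring
  rw [h1, h2]
  gcongr
  linarith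

lemma gg_tail {n : ℕ} {ψ : EE n → ℝ} (hc : Continuous ψ) {P : ℝ} (hP : ∀ y, ψ y ^ 2 ≤ P)
    (x : EE n) (s A : ℝ) (hs : 0 < s) (hA : ∀ y ∈ ball x s, ψ y ^ 2 ≤ A) (t : ℝ) (ht : 0 < t) :
    gg ψ x t ≤ A + 2 ^ (n / 2 : ℝ) * rexp (-(s ^ 2 / (4 * t))) * gg ψ x (2 * t) := by
  have hA0 : 0 ≤ A := (sq_nonneg _).trans (hA x (mem_ball_self hs))
  have i1 := (integrable_gauss x t ht).const_mul A
  have i2 := (integrable_psi hc hP x (2 * t) (by positivity)).const_mul (rexp (-(s ^ 2 / (4 * t))))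
  have h : ∫ z, ψ z ^ 2 * rexp (-(1 / (2 * t)) * ‖z - x‖ ^ 2) ≤
      ∫ z, (A * rexp (-(1 / (2 * t)) * ‖z - x‖ ^ 2) +
        rexp (-(s ^ 2 / (4 * t))) * (ψ z ^ 2 * rexp (-(1 / (2 * (2 * t))) * ‖z - x‖ ^ 2))) := by
    apply integral_mono (integrable_psi hc hP x t ht) (i1.add i2)
    intro z
    simp only [Pi.add_apply]
    by_cases hz : z ∈ ball x s
    · have h1 : ψ z ^ 2 * rexp (-(1 / (2 * t)) * ‖z - x‖ ^ 2) ≤ A * rexp (-(1 / (2 * t)) * ‖z - x‖ ^ 2) := by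
        gcongr; exact hA z hz
      have h2 : 0 ≤ rexp (-(s ^ 2 / (4 * t))) * (ψ z ^ 2 * rexp (-(1 / (2 * (2 * t))) * ‖z - x‖ ^ 2)) := by
        positivity
      linarith
    · rw [mem_ball, dist_eq_norm, not_lt] at hz
      have h1 := exp_split ht (show s ^ 2 ≤ ‖z - x‖ ^ 2 by gcongr)
      have h2 := mul_le_mul_of_nonneg_left h1 (sq_nonneg (ψ z))
      have h3 : 0 ≤ A * rexp (-(1 / (2 * t)) * ‖z - x‖ ^ 2) := by positivity
      nlinarith
  rw [integral_add i1 i2, integral_const_mul, integral_const_mul] at h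
  have h2 := mul_le_mul_of_nonneg_left h (show 0 ≤ (2 * π * t) ^ (-(n / 2 : ℝ)) by positivity)
  rw [mul_add, mul_left_comm, norm_gauss ht, mul_one] at h2
  rw [gg_eq ψ x t, gg_eq ψ x (2 * t)]
  refine h2.trans (le_of_eq ?_)
  rw [norm_const ht]
  ring

lemma gg_local {n : ℕ} {ψ : EE n → ℝ} (hc : Continuous ψ) {P : ℝ} (hP : ∀ y, ψ y ^ 2 ≤ P)
    (x : EE n) (r : ℝ) (hr : 0 < r) (t : ℝ) (ht : 0 < t) :
    gg ψ x t ≤ (2 * π * t) ^ (-(n / 2 : ℝ)) * (∫ y in ball x r, ψ y ^ 2) +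
      2 ^ (n / 2 : ℝ) * rexp (-(r ^ 2 / (4 * t))) * P := by
  have hP0 : 0 ≤ P := (sq_nonneg _).trans (hP x)
  have i1 : Integrable ((ball x r).indicator fun y => ψ y ^ 2) := by
    rw [integrable_indicator_iff measurableSet_ball]
    exact ((hc.pow 2).continuousOn.integrableOn_compact (isCompact_closedBall x r)).mono_set
      ball_subset_closedBall
  have i2 := (integrable_gauss x (2 * t) (by positivity)).const_mul (rexp (-(r ^ 2 / (4 * t))) * P)
  have h : ∫ z, ψ z ^ 2 * rexp (-(1 / (2 * t)) * ‖z - x‖ ^ 2) ≤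
      ∫ z, ((ball x r).indicator (fun y => ψ y ^ 2) z +
        (rexp (-(r ^ 2 / (4 * t))) * P) * rexp (-(1 / (2 * (2 * t))) * ‖z - x‖ ^ 2)) := by
    apply integral_mono (integrable_psi hc hP x t ht) (i1.add i2)
    intro z
    simp only [Pi.add_apply]
    by_cases hz : z ∈ ball x r
    · rw [Set.indicator_of_mem hz]
      have h1 : ψ z ^ 2 * rexp (-(1 / (2 * t)) * ‖z - x‖ ^ 2) ≤ ψ z ^ 2 * 1 := by
        gcongr
        rw [Real.exp_le_one_iff]
        have : 0 ≤ (1 / (2 * t)) * ‖z - x‖ ^ 2 := by positivity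
        linarith
      have h2 : 0 ≤ (rexp (-(r ^ 2 / (4 * t))) * P) * rexp (-(1 / (2 * (2 * t))) * ‖z - x‖ ^ 2) := by
        positivity
      linarith
    · rw [Set.indicator_of_notMem hz]
      rw [mem_ball, dist_eq_norm, not_lt] at hz
      have h1 := exp_split ht (show r ^ 2 ≤ ‖z - x‖ ^ 2 by gcongr)
      have h2 := mul_le_mul (hP z) h1 (by positivity) hP0
      linarith
  rw [integral_add i1 i2, integral_const_mul, integral_indicator measurableSet_ball] at h
  have h2 := mul_le_mul_of_nonneg_left h (show 0 ≤ (2 * π * t) ^ (-(n / 2 : ℝ)) by positivity)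
  rw [gg_eq ψ x t]
  refine h2.trans (le_of_eq ?_)
  have h3 := norm_gauss (show 0 < 2 * t by positivity) x
  rw [mul_add]
  congr 1
  rw [norm_const ht]
  linear_combination (2 ^ (n / 2 : ℝ) * rexp (-(r ^ 2 / (4 * t))) * P) * h3

lemma gg_lower {n : ℕ} {ψ : EE n → ℝ} (hc : Continuous ψ) {P : ℝ} (hP : ∀ y, ψ y ^ 2 ≤ P)
    (x : EE n) (r : ℝ) (t : ℝ) (ht : 0 < t) :
    (2 * π * t) ^ (-(n / 2 : ℝ)) * (rexp (-(r ^ 2 / (2 * t))) * ∫ y in ball x r, ψ y ^ 2) ≤ gg ψ x t := by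
  rw [gg_eq]
  gcongr
  have i1 : Integrable ((ball x r).indicator fun y => ψ y ^ 2) := by
    rw [integrable_indicator_iff measurableSet_ball]
    exact ((hc.pow 2).continuousOn.integrableOn_compact (isCompact_closedBall x r)).mono_set
      ball_subset_closedBall
  rw [← integral_indicator measurableSet_ball, ← integral_const_mul]
  apply integral_mono (i1.const_mul _) (integrable_psi hc hP x t ht)
  intro z
  simp only []
  by_cases hz : z ∈ ball x r
  · rw [Set.indicator_of_mem hz, mul_comm]
    gcongr
    rw [mem_ball, dist_eq_norm] at hz
    have h1 : ‖z - x‖ ^ 2 ≤ r ^ 2 := by gcongr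
    have : -(1 / (2 * t)) * ‖z - x‖ ^ 2 = -(‖z - x‖ ^ 2 / (2 * t)) := by ring
    rw [this]
    gcongr
  · rw [Set.indicator_of_notMem hz]
    simp only [mul_zero]
    positivity

lemma two_rpow_le (n : ℕ) : (2:ℝ) ^ (n / 2 : ℝ) ≤ rexp n := by
  have h : (2:ℝ) ≤ rexp 1 := by have := Real.add_one_le_exp 1; linarith
  calc (2:ℝ) ^ (n / 2 : ℝ) ≤ (2:ℝ) ^ (n : ℝ) := by
        apply Real.rpow_le_rpow_of_exponent_le (by norm_num)
        have : (0:ℝ) ≤ n := by positivity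
        linarith
    _ ≤ (rexp 1) ^ (n : ℝ) := by gcongr
    _ = rexp n := by rw [← Real.exp_mul, one_mul]

set_option maxHeartbeats 4000000 in
lemma core {n : ℕ} {K₁ K₂ : ℝ} (hK₁ : 0 < K₁) (hK : K₁ ≤ K₂) {δ D : ℝ} (hδ : δ = 1 / (8 * (n + 2)))
    (hD : D = 2 * δ ^ (-(n / 2 : ℝ)) * K₂ / K₁)
    {ψ : EE n → ℝ} {lam : ℝ} (hlam : 1 ≤ lam) (hc : Continuous ψ) {P0 : ℝ} (hP0 : ∀ y, ψ y ^ 2 ≤ P0)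
    (F1 : ∀ x t, 0 < t → ψ x ^ 2 ≤ rexp (lam * t) * gg ψ x t)
    (F2 : ∀ x t T, 0 < t → t ≤ T → (rexp (lam * (2 * t)) * gg ψ x (2 * t)) * (rexp (lam * T) * gg ψ x T) ≤
      (rexp (lam * t) * gg ψ x t) * (rexp (lam * (2 * T)) * gg ψ x (2 * T)))
    {r : ℝ} (hr : 0 < r) (hN : 1 ≤ r * √lam)
    (hint : ∀ x : EE n, K₁ * r ^ n ≤ (∫ y in ball x r, (ψ y)^2) ∧
          (∫ y in ball x r, (ψ y)^2) ≤ K₂ * r ^ n)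
    (x : EE n) (s : ℝ) (hs : 0 < s) (hsr : s < 10 * r) :
    Real.log (sSup ((fun y => (ψ y)^2) '' ball x (2*s)) /
              sSup ((fun y => (ψ y)^2) '' ball x s)) ≤ 20 * (29 + n + Real.log D) * (r * √lam) := by
  set N := r * √lam with hNdef
  have hq : 0 < √lam := Real.sqrt_pos.mpr (by linarith)
  have hqq : √lam * √lam = lam := Real.mul_self_sqrt (by linarith)
  have hn0 : (0:ℝ) ≤ n := by positivity
  have hδ0 : 0 < δ := by rw [hδ]; positivity
  have hδ1 : δ ≤ 1 := by
    rw [hδ, div_le_one (by positivity)]; linarith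
  have hK₂ : 0 < K₂ := hK₁.trans_le hK
  have hδp : 1 ≤ δ ^ (-(n / 2 : ℝ)) :=
    Real.one_le_rpow_of_pos_of_le_one_of_nonpos hδ0 hδ1 (by linarith)
  have hD1 : 1 ≤ D := by
    rw [hD, le_div_iff₀ hK₁]
    nlinarith
  have hLD : 0 ≤ Real.log D := Real.log_nonneg hD1
  set T := r / √lam with hT
  have hT0 : 0 < T := by positivity
  have hlT : lam * T = N := by
    rw [hT, hNdef]
    calc lam * (r / √lam) = (√lam * √lam) * (r / √lam) := by rw [hqq]
      _ = _ := by field_simp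
  have hrT : r ^ 2 = N * T := by
    rw [hT, hNdef]; field_simp
  have hP0' : 0 ≤ P0 := (sq_nonneg _).trans (hP0 x)
  -- global sup
  set P := sSup (Set.range fun y => ψ y ^ 2) with hPdef
  have hbdd : BddAbove (Set.range fun y => ψ y ^ 2) := ⟨P0, by rintro _ ⟨y, rfl⟩; exact hP0 y⟩
  have hP : ∀ y, ψ y ^ 2 ≤ P := fun y => le_csSup hbdd ⟨y, rfl⟩
  have hPnn : 0 ≤ P := (sq_nonneg _).trans (hP x)
  set W := (2 * π * T) ^ (-(n / 2 : ℝ)) with hW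
  have hW0 : 0 < W := by positivity
  have hPle : P ≤ 2 * rexp N * (δ ^ (-(n / 2 : ℝ)) * W * (K₂ * r ^ n)) := by
    have hy : ∀ y, ψ y ^ 2 ≤ rexp N * (δ ^ (-(n / 2 : ℝ)) * W * (K₂ * r ^ n)) + P / 2 := by
      intro y
      have h1 := F1 y (δ * T) (by positivity)
      have h2 := gg_local hc hP y r hr (δ * T) (by positivity)
      have h3 : (2 * π * (δ * T)) ^ (-(n / 2 : ℝ)) = δ ^ (-(n / 2 : ℝ)) * W := by
        rw [hW, ← Real.mul_rpow hδ0.le (by positivity)]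
        congr 1; ring
      have h4 : lam * (δ * T) = δ * N := by rw [← hlT]; ring
      have h5 : r ^ 2 / (4 * (δ * T)) = 2 * (n + 2) * N := by
        rw [hrT, hδ]; field_simp; ring
      rw [h3, h5] at h2
      rw [h4] at h1
      have h6 : rexp (δ * N) ≤ rexp N := by
        apply Real.exp_le_exp.mpr; nlinarith
      have h7 : rexp (δ * N) * (2 ^ (n / 2 : ℝ) * rexp (-(2 * (n + 2) * N))) ≤ 1 / 2 := by
        calc _ ≤ rexp N * (rexp n * rexp (-(2 * (n + 2) * N))) := by
              gcongr; exact two_rpow_le n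
          _ = rexp (N + n - 2 * (n + 2) * N) := by
              rw [← Real.exp_add, ← Real.exp_add]; congr 1; ring
          _ ≤ rexp (-1) := by
              apply Real.exp_le_exp.mpr; nlinarith
          _ ≤ 1 / 2 := by
              rw [Real.exp_neg, one_div]
              apply inv_anti₀ (by norm_num)
              have := Real.add_one_le_exp 1; linarith
      have h8 : gg ψ y (δ * T) ≤ δ ^ (-(n / 2 : ℝ)) * W * (K₂ * r ^ n) +
          2 ^ (n / 2 : ℝ) * rexp (-(2 * (n + 2) * N)) * P := by
        refine h2.trans ?_
        gcongr
        exact (hint y).2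
      calc ψ y ^ 2 ≤ rexp (δ * N) * (δ ^ (-(n / 2 : ℝ)) * W * (K₂ * r ^ n) +
          2 ^ (n / 2 : ℝ) * rexp (-(2 * (n + 2) * N)) * P) := h1.trans (by gcongr)
        _ = rexp (δ * N) * (δ ^ (-(n / 2 : ℝ)) * W * (K₂ * r ^ n)) +
          (rexp (δ * N) * (2 ^ (n / 2 : ℝ) * rexp (-(2 * (n + 2) * N)))) * P := by ring
        _ ≤ rexp N * (δ ^ (-(n / 2 : ℝ)) * W * (K₂ * r ^ n)) + (1 / 2) * P := by gcongr
        _ = _ := by ring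
    have : P ≤ rexp N * (δ ^ (-(n / 2 : ℝ)) * W * (K₂ * r ^ n)) + P / 2 :=
      csSup_le (Set.range_nonempty _) (by rintro _ ⟨y, rfl⟩; exact hy y)
    linarith
  -- top scale
  have hlow : W * (rexp (-(N / 2)) * (K₁ * r ^ n)) ≤ gg ψ x T := by
    refine le_trans ?_ (gg_lower hc hP x r T hT0)
    have : r ^ 2 / (2 * T) = N / 2 := by rw [hrT]; field_simp
    rw [this]
    gcongr
    exact (hint x).1
  have hgT : 0 < gg ψ x T := lt_of_lt_of_le (by positivity) hlow
  have htop : gg ψ x (2 * T) ≤ D * rexp (2 * N) * gg ψ x T := by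
    calc gg ψ x (2 * T) ≤ P := gg_le_sup hc hP x _ (by positivity)
      _ ≤ _ := hPle
      _ = D * rexp (N + N / 2) * (W * (rexp (-(N / 2)) * (K₁ * r ^ n))) := by
          rw [hD, Real.exp_add, Real.exp_neg]
          field_simp
      _ ≤ D * rexp (2 * N) * gg ψ x T := by
          gcongr
          linarith
  set M := (29 + n + Real.log D) * N with hM
  have hMN : 29 * N ≤ M := by rw [hM]; nlinarith
  have hMn : (n : ℝ) + 1 + 3 * N + Real.log D ≤ M := by rw [hM]; nlinarith
  have hM0 : 0 < M := by linarith
  have hDM : D * rexp (3 * N) ≤ rexp M := by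
    calc D * rexp (3 * N) = rexp (Real.log D + 3 * N) := by
          rw [Real.exp_add, Real.exp_log (by linarith)]
      _ ≤ _ := by apply Real.exp_le_exp.mpr; linarith
  set t := s ^ 2 / (8 * M) with ht
  have ht0 : 0 < t := by positivity
  have htT : t ≤ T := by
    rw [ht, div_le_iff₀ (by positivity)]
    have : s ^ 2 ≤ 100 * (N * T) := by
      rw [← hrT]
      calc s ^ 2 ≤ (10 * r) ^ 2 := by gcongr
        _ = _ := by ring
    have h2 := mul_le_mul_of_nonneg_left hMN hT0.le
    have h3 : 0 ≤ N * T := by positivity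
    linarith
  have hlt : lam * t ≤ N := by rw [← hlT]; gcongr
  have hlt0 : 0 ≤ lam * t := by positivity
  have hgt0 : 0 ≤ gg ψ x t := by rw [gg_eq]; positivity
  have hdoub : gg ψ x (2 * t) ≤ rexp M * gg ψ x t := by
    have h1 := F2 x t T ht0 htT
    have h2 : (rexp (lam * t) * gg ψ x t) * (rexp (lam * (2 * T)) * gg ψ x (2 * T)) ≤
        (rexp (lam * t) * gg ψ x t) * (rexp (lam * (2 * T)) * (D * rexp (2 * N) * gg ψ x T)) := by
      gcongr
    have h3 : (rexp (lam * t) * gg ψ x t) * (rexp (lam * (2 * T)) * (D * rexp (2 * N) * gg ψ x T)) =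
        (rexp (lam * t) * (D * rexp (3 * N)) * gg ψ x t) * (rexp (lam * T) * gg ψ x T) := by
      have e1 : lam * (2 * T) = N + N := by rw [← hlT]; ring
      have e2 : 3 * N = N + 2 * N := by ring
      rw [e1, hlT, e2, Real.exp_add, Real.exp_add]
      ring
    have h4 := le_of_mul_le_mul_right (h1.trans (h2.trans h3.le)) (by positivity)
    have h5 : rexp (lam * (2 * t)) = rexp (lam * t) * rexp (lam * t) := by
      rw [← Real.exp_add]; congr 1; ring
    rw [h5, mul_assoc, mul_assoc] at h4
    have h6 := le_of_mul_le_mul_left h4 (Real.exp_pos _)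
    have hg2 : 0 ≤ gg ψ x (2 * t) := by rw [gg_eq]; positivity
    calc gg ψ x (2 * t) ≤ rexp (lam * t) * gg ψ x (2 * t) :=
          le_mul_of_one_le_left hg2 (Real.one_le_exp hlt0)
      _ ≤ D * rexp (3 * N) * gg ψ x t := h6
      _ ≤ _ := by gcongr
  set A := sSup ((fun y => (ψ y)^2) '' ball x s) with hA
  have hbA : BddAbove ((fun y => (ψ y)^2) '' ball x s) := hbdd.mono (Set.image_subset_range _ _)
  have hAle : ∀ y ∈ ball x s, ψ y ^ 2 ≤ A := fun y hy => le_csSup hbA ⟨y, hy, rfl⟩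
  have hA0 : 0 ≤ A := (sq_nonneg _).trans (hAle x (mem_ball_self hs))
  have hgA : gg ψ x t ≤ 2 * A := by
    have h1 := gg_tail hc hP x s A hs hAle t ht0
    have h2 : s ^ 2 / (4 * t) = 2 * M := by rw [ht]; field_simp; norm_num
    rw [h2] at h1
    have h3 : 2 ^ (n / 2 : ℝ) * rexp (-(2 * M)) * gg ψ x (2 * t) ≤ (1 / 2) * gg ψ x t := by
      calc _ ≤ rexp n * rexp (-(2 * M)) * (rexp M * gg ψ x t) := by
            gcongr
            · rw [gg_eq]; positivity
            · exact two_rpow_le n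
        _ = rexp (n - M) * gg ψ x t := by
            rw [← mul_assoc, ← Real.exp_add, ← Real.exp_add]; congr 2; ring
        _ ≤ (1 / 2) * gg ψ x t := by
            gcongr
            calc rexp (n - M) ≤ rexp (-1) := by apply Real.exp_le_exp.mpr; linarith
              _ ≤ 1 / 2 := by
                rw [Real.exp_neg, one_div]
                apply inv_anti₀ (by norm_num)
                have := Real.add_one_le_exp 1; linarith
    linarith
  set B := sSup ((fun y => (ψ y)^2) '' ball x (2 * s)) with hB
  have hBA : B ≤ rexp (20 * M) * A := by
    apply csSup_le ((nonempty_ball.mpr (by positivity)).image _)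
    rintro _ ⟨y, hy, rfl⟩
    simp only []
    have h1 := F1 y t ht0
    have h2 := gg_shift hc hP x y (2 * s) (by rw [mem_ball, dist_eq_norm] at hy; exact hy.le) t ht0
    have h3 : (2 * s) ^ 2 / (2 * t) = 16 * M := by rw [ht]; field_simp; norm_num
    rw [h3] at h2
    have h2e : (2:ℝ) ≤ rexp 1 := by have := Real.add_one_le_exp 1; linarith
    calc ψ y ^ 2 ≤ rexp N * (rexp n * rexp (16 * M) * (rexp M * (rexp 1 * A))) := by
          refine h1.trans ?_
          refine mul_le_mul (Real.exp_le_exp.mpr hlt) (h2.trans ?_) (by rw [gg_eq]; positivity) (Real.exp_pos _).le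
          have hg2 : 0 ≤ gg ψ x (2 * t) := by rw [gg_eq]; positivity
          gcongr
          · exact two_rpow_le n
          · refine hdoub.trans ?_
            gcongr
            refine hgA.trans ?_
            gcongr
      _ = rexp (N + n + 17 * M + 1) * A := by
          rw [show N + n + 17 * M + 1 = N + (n + 16 * M + (M + 1)) by ring, Real.exp_add, Real.exp_add, Real.exp_add, Real.exp_add]
          ring
      _ ≤ rexp (20 * M) * A := by
          gcongr
          linarith
  rw [show 20 * (29 + n + Real.log D) * N = 20 * M by rw [hM]; ring]
  have hB0 : 0 ≤ B := Real.sSup_nonneg (by rintro _ ⟨y, _, rfl⟩; positivity)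
  rcases eq_or_lt_of_le (div_nonneg hB0 hA0) with h | h
  · rw [← h, Real.log_zero]; positivity
  · rw [Real.log_le_iff_le_exp h]
    have hApos : 0 < A := by
      rcases eq_or_lt_of_le hA0 with h' | h'
      · rw [← h', div_zero] at h; exact absurd h (lt_irrefl _)
      · exact h'
    rw [div_le_iff₀ hApos]
    exact hBA

theorem improved_doubling_estimate
    (n : ℕ) (hn : 1 ≤ n) (K₁ K₂ : ℝ) (hK₁ : 0 < K₁) (hK : K₁ ≤ K₂) :
    ∃ c r₀ : ℝ, 0 < c ∧ 0 < r₀ ∧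
      ∀ (ψ : EuclideanSpace ℝ (Fin n) → ℝ) (lam : ℝ),
        1 ≤ lam → ContDiff ℝ (⊤ : ℕ∞) ψ → ZnPeriodic n ψ →
        (∀ x, lap n ψ x = -lam * ψ x) →
        ∀ r : ℝ, lam ^ (-(1:ℝ)/2) ≤ r → r ≤ r₀ →
        (∀ x : EuclideanSpace ℝ (Fin n),
          K₁ * r ^ n ≤ (∫ y in Metric.ball x r, (ψ y)^2) ∧
          (∫ y in Metric.ball x r, (ψ y)^2) ≤ K₂ * r ^ n) →
        ∀ (x : EuclideanSpace ℝ (Fin n)) (s : ℝ), 0 < s → s < 10*r →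
          Real.log (sSup ((fun y => (ψ y)^2) '' Metric.ball x (2*s)) /
              sSup ((fun y => (ψ y)^2) '' Metric.ball x s)) ≤ c * r * Real.sqrt lam := by
  set δ : ℝ := 1 / (8 * (n + 2)) with hδ
  set D : ℝ := 2 * δ ^ (-(n / 2 : ℝ)) * K₂ / K₁ with hD
  refine ⟨20 * (29 + n + |Real.log D|), 1, by positivity, one_pos, ?_⟩
  intro ψ lam hlam hsm hper hlap r hr _ hint x s hs hsr
  have hlam0 : 0 < lam := by linarith
  have hq : 0 < √lam := Real.sqrt_pos.mpr hlam0
  have hr' : (√lam)⁻¹ ≤ r := by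
    rw [show (-(1:ℝ) / 2) = -(1 / 2) by norm_num, Real.rpow_neg hlam0.le, ← Real.sqrt_eq_rpow] at hr
    exact hr
  have hr0 : 0 < r := lt_of_lt_of_le (by positivity) hr'
  have hN : 1 ≤ r * √lam := by
    calc (1:ℝ) = (√lam)⁻¹ * √lam := by field_simp
      _ ≤ _ := by gcongr
  obtain ⟨S, a, hw, hψ⟩ := trig_poly hsm hper hlap
  have hbd : ∀ y, ψ y ^ 2 ≤ (∑ ξ ∈ S, ‖a ξ‖) ^ 2 := by
    intro y
    have h1 : |ψ y| ≤ ∑ ξ ∈ S, ‖a ξ‖ := by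
      rw [← Real.norm_eq_abs, ← Complex.norm_real, hψ]
      refine (norm_sum_le _ _).trans (Finset.sum_le_sum fun ξ _ => ?_)
      rw [norm_mul, mul_comm Complex.I, Complex.norm_exp_ofReal_mul_I, mul_one]
    rw [← sq_abs]
    gcongr
  have F1 : ∀ x t, 0 < t → ψ x ^ 2 ≤ rexp (lam * t) * gg ψ x t := by
    intro x t ht
    obtain ⟨Q, hQ, hQ0, hH⟩ := gg_series S a wv hw hψ x
    have := le_hasSum (hH t ht) 0 (fun k _ => mul_nonneg (hQ k) (by positivity))
    simpa [hQ0] using this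
  have F2 : ∀ x t T, 0 < t → t ≤ T → (rexp (lam * (2 * t)) * gg ψ x (2 * t)) * (rexp (lam * T) * gg ψ x T) ≤
      (rexp (lam * t) * gg ψ x t) * (rexp (lam * (2 * T)) * gg ψ x (2 * T)) := by
    intro x t T ht hT
    obtain ⟨Q, hQ, hQ0, hH⟩ := gg_series S a wv hw hψ x
    exact cheb Q hQ t T ht hT (fun t => rexp (lam * t) * gg ψ x t) hH
  refine (core hK₁ hK hδ hD hlam hsm.continuous hbd F1 F2 hr0 hN hint x s hs hsr).trans ?_
  rw [mul_assoc _ r]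
  gcongr
  exact le_abs_self _
end
end

section
/- Let n ≥ 3. There exist constants ε₀ ∈ (0,1) and a₅ > 0, depending only on n, such that for every smooth ℤⁿ-periodic real-valued eigenfunction ψ : ℝⁿ → ℝ of the Euclidean Laplacian with eigenvalue λ ≥ 1, ψ not identically zero, every nodal domain Ω of ψ satisfies in(Ω) ≥ a₅ λ^{-1/2} · N(λ)^{-(n-1)(n-2)/(2n)}, where N(λ) = sup{ log( sup_{B_{2s}(x)} ψ² / sup_{B_s(x)} ψ² ) : x ∈ ℝⁿ, 0 < s ≤ ε₀ λ^{-1/2} }. -/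
open MeasureTheory Metric Filter Real

noncomputable section

namespace NodalAux

abbrev Eu (n : ℕ) := EuclideanSpace ℝ (Fin n)

def P1 {n : ℕ} (z : Eu n) : ℝ := max (1 - ‖z‖^2) 0

lemma P1_cont {n : ℕ} : Continuous (P1 (n := n)) := by unfold P1; fun_prop

lemma P1_nonneg {n : ℕ} (z : Eu n) : 0 ≤ P1 z := le_max_right _ _

lemma P1_le_one {n : ℕ} (z : Eu n) : P1 z ≤ 1 := by
  unfold P1; exact max_le (by nlinarith [sq_nonneg ‖z‖]) zero_le_one

lemma P1_zero {n : ℕ} (z : Eu n) (hz : 1 ≤ ‖z‖) : P1 z = 0 := by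
  unfold P1; exact max_eq_right (by nlinarith)

lemma P1_supp {n : ℕ} : HasCompactSupport (P1 (n := n)) := by
  apply HasCompactSupport.of_support_subset_isCompact (isCompact_closedBall (0 : Eu n) 1)
  intro z hz
  by_contra h
  apply hz
  apply P1_zero
  simp at h
  exact h.le

lemma P2_supp {n : ℕ} : HasCompactSupport (fun z : Eu n => P1 z ^ 2) := by
  have := (P1_supp (n := n)).mul_left (f := P1)
  have e : (fun z : Eu n => P1 z ^ 2) = P1 * P1 := by ext z; simp [pow_two]
  rw [e]; exact this

lemma int_P1 {n : ℕ} (f : Eu n → ℝ) (hf : Continuous f) : Integrable (fun z => f z * P1 z) :=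
  (hf.mul P1_cont).integrable_of_hasCompactSupport (P1_supp.mul_left)

lemma int_P2 {n : ℕ} (f : Eu n → ℝ) (hf : Continuous f) : Integrable (fun z => f z * P1 z ^ 2) :=
  (hf.mul (P1_cont.pow 2)).integrable_of_hasCompactSupport (P2_supp.mul_left)

lemma max_sq_deriv (t : ℝ) : HasDerivAt (fun t : ℝ => (max t 0)^2) (2 * max t 0) t := by
  rcases lt_trichotomy t 0 with h | h | h
  · have : (fun t : ℝ => (max t 0)^2) =ᶠ[nhds t] fun _ => 0 := by
      filter_upwards [gt_mem_nhds h] with x hx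
      simp [max_eq_right hx.le]
    rw [max_eq_right h.le]
    simpa using (hasDerivAt_const t (0:ℝ)).congr_of_eventuallyEq this
  · subst h
    simp only [max_self, mul_zero]
    rw [hasDerivAt_iff_isLittleO_nhds_zero]
    simp only [zero_add, max_self, smul_zero, sub_zero, ne_eq, OfNat.ofNat_ne_zero,
      not_false_eq_true, zero_pow]
    have h2 : (fun h : ℝ => h ^ 2) =o[nhds 0] fun h => h := by
      simpa using Asymptotics.isLittleO_pow_pow (𝕜 := ℝ) (m := 1) (n := 2) (by norm_num)
    refine Asymptotics.IsBigO.trans_isLittleO ?_ h2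
    apply Asymptotics.IsBigO.of_bound 1
    filter_upwards with x
    simp only [norm_pow, Real.norm_eq_abs, one_mul]
    apply pow_le_pow_left₀ (abs_nonneg _)
    rcases le_total x 0 with h | h
    · simp [max_eq_right h]
    · simp [max_eq_left h]
  · have : (fun t : ℝ => (max t 0)^2) =ᶠ[nhds t] fun t => t^2 := by
      filter_upwards [lt_mem_nhds h] with x hx
      simp [max_eq_left hx.le]
    rw [max_eq_left h.le]
    simpa using (hasDerivAt_pow 2 t).congr_of_eventuallyEq this

lemma P2_fderiv {n : ℕ} (z : Eu n) : HasFDerivAt (fun z : Eu n => P1 z ^ 2)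
    ((2 * P1 z) • (-((2:ℕ) • innerSL ℝ z) : Eu n →L[ℝ] ℝ)) z := by
  have h1 : HasFDerivAt (fun z : Eu n => 1 - ‖z‖^2) (-((2:ℕ) • innerSL ℝ z)) z := by
    have := (hasStrictFDerivAt_norm_sq z).hasFDerivAt
    simpa using this.const_sub 1
  exact (max_sq_deriv (1 - ‖z‖^2)).comp_hasFDerivAt z h1

lemma P2_fderiv_single {n : ℕ} (z : Eu n) (i : Fin n) :
    fderiv ℝ (fun z : Eu n => P1 z ^ 2) z (EuclideanSpace.single i (1:ℝ)) = -4 * (z i * P1 z) := by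
  rw [(P2_fderiv z).fderiv]
  simp [EuclideanSpace.inner_single_right]
  ring

lemma contDiff_partial {n : ℕ} {ψ : Eu n → ℝ} (h : ContDiff ℝ (⊤ : ℕ∞) ψ) (v : Eu n) :
    ContDiff ℝ (⊤ : ℕ∞) (fun y => fderiv ℝ ψ y v) := by
  have h1 : ContDiff ℝ (⊤ : ℕ∞) (fderiv ℝ ψ) := h.fderiv_right (by simp)
  exact h1.clm_apply contDiff_const

lemma lap_cont {n : ℕ} {ψ : Eu n → ℝ} (h : ContDiff ℝ (⊤ : ℕ∞) ψ) : Continuous (lap n ψ) := by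
  unfold lap
  apply continuous_finsetSum
  intro i _
  exact (contDiff_partial (contDiff_partial h _) _).continuous

lemma parts {n : ℕ} {ψ : Eu n → ℝ} (h : ContDiff ℝ (⊤ : ℕ∞) ψ) (y : Eu n) (δ : ℝ) :
    ∫ z, fderiv ℝ ψ (y + δ • z) z * P1 z = δ / 4 * ∫ z, lap n ψ (y + δ • z) * P1 z ^ 2 := by
  have hc : Continuous (fun z : Eu n => y + δ • z) := by fun_prop
  have key : ∀ i : Fin n, ∫ z, fderiv ℝ ψ (y + δ • z) (EuclideanSpace.single i (1:ℝ)) *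
      (z i * P1 z) = δ / 4 * ∫ z, fderiv ℝ (fun y => fderiv ℝ ψ y (EuclideanSpace.single i (1:ℝ)))
        (y + δ • z) (EuclideanSpace.single i (1:ℝ)) * P1 z ^ 2 := by
    intro i
    set e : Eu n := EuclideanSpace.single i (1:ℝ) with he
    have hg := contDiff_partial h e
    have hgg := contDiff_partial hg e
    have hfd : ∀ z : Eu n, fderiv ℝ (fun z => fderiv ℝ ψ (y + δ • z) e) z e =
        δ * fderiv ℝ (fun y => fderiv ℝ ψ y e) (y + δ • z) e := by
      intro z
      have h1 : HasFDerivAt (fun z : Eu n => y + δ • z) (δ • ContinuousLinearMap.id ℝ (Eu n)) z := by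
        have := ((hasFDerivAt_id (𝕜 := ℝ) z).const_smul δ).const_add y
        simpa using this
      have h2 := ((hg.differentiable (by simp) (y + δ • z)).hasFDerivAt).comp z h1
      have h3 := h2.fderiv
      simp only [Function.comp_def] at h3
      rw [h3]
      simp
    have ibp := integral_mul_fderiv_eq_neg_fderiv_mul_of_integrable (μ := (volume : Measure (Eu n)))
      (f := fun z => fderiv ℝ ψ (y + δ • z) e) (g := fun z => P1 z ^ 2) (v := e)
      (by
        simp_rw [hfd]
        exact int_P2 _ (continuous_const.mul (hgg.continuous.comp hc)))
      (by
        simp_rw [he, P2_fderiv_single, ← he]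
        have := int_P1 (fun z => fderiv ℝ ψ (y + δ • z) e * (-4 * z i))
          ((hg.continuous.comp hc).mul (by fun_prop))
        refine this.congr (Filter.Eventually.of_forall fun z => ?_)
        simp only; ring)
      (int_P2 _ (hg.continuous.comp hc))
      (fun z _ => ((hg.differentiable (by simp)).comp (by fun_prop)) z)
      (fun z _ => (P2_fderiv z).differentiableAt)
    simp_rw [hfd, he, P2_fderiv_single, ← he, mul_assoc δ, integral_const_mul] at ibp
    have e2 : ∀ z : Eu n, fderiv ℝ ψ (y + δ • z) e * (-4 * (z i * P1 z)) =
      -4 * (fderiv ℝ ψ (y + δ • z) e * (z i * P1 z)) := fun z => by ring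
    simp_rw [e2, integral_const_mul] at ibp
    linarith
  have expand : ∀ z : Eu n, fderiv ℝ ψ (y + δ • z) z * P1 z =
      ∑ i, fderiv ℝ ψ (y + δ • z) (EuclideanSpace.single i (1:ℝ)) * (z i * P1 z) := by
    intro z
    have hz : z = ∑ i, z i • EuclideanSpace.single i (1:ℝ) := by
      ext j
      simp [Pi.single_apply]
    conv_lhs => rw [show (fderiv ℝ ψ (y + δ • z)) z = (fderiv ℝ ψ (y + δ • z))
      (∑ i, z i • EuclideanSpace.single i (1:ℝ)) from by rw [← hz]]
    rw [map_sum, Finset.sum_mul]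
    apply Finset.sum_congr rfl
    intro i _
    rw [map_smul, smul_eq_mul]; ring
  simp_rw [expand]
  rw [integral_finsetSum]
  · simp_rw [key, lap, Finset.sum_mul]
    rw [integral_finsetSum, Finset.mul_sum]
    intro i _
    exact int_P2 _ ((contDiff_partial (contDiff_partial h _) _).continuous.comp hc)
  · intro i _
    have := int_P1 (fun z => fderiv ℝ ψ (y + δ • z) (EuclideanSpace.single i (1:ℝ)) * z i)
          (((contDiff_partial h _).continuous.comp hc).mul (by fun_prop))
    refine this.congr (Filter.Eventually.of_forall fun z => ?_)
    simp only; ring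

lemma F_deriv {n : ℕ} {ψ : Eu n → ℝ} (h : ContDiff ℝ (⊤ : ℕ∞) ψ) (y : Eu n) (δ : ℝ) :
    HasDerivAt (fun δ : ℝ => ∫ z, ψ (y + δ • z) * P1 z)
      (δ / 4 * ∫ z, lap n ψ (y + δ • z) * P1 z ^ 2) δ := by
  rw [← parts h]
  have hfc : Continuous (fderiv ℝ ψ) := h.continuous_fderiv (by simp)
  obtain ⟨C, hC⟩ := ((isCompact_closedBall δ 1).prod
    (isCompact_closedBall (0 : Eu n) 1)).exists_bound_of_continuousOn
    (f := fun p : ℝ × Eu n => fderiv ℝ ψ (y + p.1 • p.2) p.2)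
    (by
      apply Continuous.continuousOn
      exact (hfc.comp (by fun_prop)).clm_apply continuous_snd)
  refine (hasDerivAt_integral_of_dominated_loc_of_deriv_le
    (F := fun δ z => ψ (y + δ • z) * P1 z)
    (F' := fun δ z => fderiv ℝ ψ (y + δ • z) z * P1 z)
    (bound := fun z => C * P1 z) (closedBall_mem_nhds δ one_pos) ?_ ?_ ?_ ?_ ?_ ?_).2
  · exact Filter.Eventually.of_forall fun δ =>
      (int_P1 _ (h.continuous.comp (by fun_prop))).aestronglyMeasurable
  · exact int_P1 _ (h.continuous.comp (by fun_prop))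
  · exact (int_P1 _ ((hfc.comp (by fun_prop)).clm_apply continuous_id)).aestronglyMeasurable
  · refine Filter.Eventually.of_forall fun z t ht => ?_
    rw [norm_mul, Real.norm_of_nonneg (P1_nonneg z)]
    by_cases hz : ‖z‖ ≤ 1
    · exact mul_le_mul_of_nonneg_right (hC (t, z) ⟨ht, by simpa using hz⟩) (P1_nonneg z)
    · rw [P1_zero z (not_le.1 hz).le]; simp
  · exact int_P1 _ continuous_const
  · refine Filter.Eventually.of_forall fun z t ht => ?_
    have h1 : HasDerivAt (fun t : ℝ => y + t • z) z t := by
      simpa using ((hasDerivAt_id t).smul_const z).const_add y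
    have h2 := ((h.differentiable (by simp) (y + t • z)).hasFDerivAt).comp_hasDerivAt t h1
    exact h2.mul_const _

lemma c1_pos {n : ℕ} : 0 < ∫ z : Eu n, P1 z := by
  have hi : Integrable (fun z : Eu n => P1 z) := by
    simpa using int_P1 (fun _ : Eu n => (1:ℝ)) continuous_const
  refine (integral_pos_iff_support_of_nonneg (fun z => P1_nonneg z) hi).2 ?_
  apply IsOpen.measure_pos
  · exact P1_cont.isOpen_support
  · exact ⟨0, by simp [P1]⟩

lemma scale_cmp {n : ℕ} (v : Eu n → ℝ) (hv : Continuous v) (x y : Eu n) (s : ℝ) (hs : 0 < s)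
    (hpos : ∀ z ∈ ball x s, 0 ≤ v z) (hy : y ∈ ball x (s/4)) :
    ∫ z, v (y + (s/2) • z) * P1 z ≤ 2 ^ n * (16/7) * ∫ z, v (x + s • z) * P1 z := by
  have e1 : ∫ z, v (y + (s/2) • z) * P1 z =
      2 ^ n * ∫ z, v (x + s • z) * P1 ((2:ℝ) • (z - s⁻¹ • (y - x))) := by
    have h1 := integral_sub_right_eq_self (μ := (volume : Measure (Eu n)))
      (fun z => v (x + s • (z + s⁻¹ • (y - x))) * P1 ((2:ℝ) • z)) (s⁻¹ • (y - x))
    simp only [sub_add_cancel] at h1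
    rw [h1]
    have h2 := Measure.integral_comp_smul_of_nonneg (volume : Measure (Eu n))
      (fun z => v (y + (s/2) • z) * P1 z) 2 (hR := by norm_num)
    have h3 : ∀ z : Eu n, y + (s/2) • ((2:ℝ) • z) = x + s • (z + s⁻¹ • (y - x)) := by
      intro z
      rw [smul_smul, smul_add, smul_smul, mul_inv_cancel₀ hs.ne', one_smul,
        div_mul_cancel₀ _ (by norm_num : (2:ℝ) ≠ 0)]
      abel
    simp only [h3] at h2
    rw [h2]
    simp
  rw [e1, mul_assoc]
  apply mul_le_mul_of_nonneg_left _ (by positivity)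
  rw [← integral_const_mul]
  have hin : ∀ z : Eu n, ‖z‖ < 1 → 0 ≤ v (x + s • z) := by
    intro z hz
    apply hpos
    rw [mem_ball, dist_eq_norm, add_sub_cancel_left, norm_smul, Real.norm_of_nonneg hs.le]
    nlinarith
  have hnear : ∀ z : Eu n, ‖(2:ℝ) • (z - s⁻¹ • (y - x))‖ < 1 → ‖z‖ < 3/4 := by
    intro z hz
    rw [norm_smul, Real.norm_of_nonneg (by norm_num)] at hz
    have h1 : ‖s⁻¹ • (y - x)‖ < 1/4 := by
      rw [norm_smul, Real.norm_of_nonneg (by positivity), ← dist_eq_norm]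
      rw [mem_ball] at hy
      rw [inv_mul_lt_iff₀ hs]; linarith
    have h2 : ‖z‖ ≤ ‖z - s⁻¹ • (y - x)‖ + ‖s⁻¹ • (y - x)‖ := by
      simpa using norm_add_le (z - s⁻¹ • (y - x)) (s⁻¹ • (y - x))
    linarith
  apply integral_mono_of_nonneg
  · refine Filter.Eventually.of_forall fun z => ?_
    by_cases hz : ‖(2:ℝ) • (z - s⁻¹ • (y - x))‖ < 1
    · exact mul_nonneg (hin z (by linarith [hnear z hz])) (P1_nonneg _)
    · simp [P1_zero _ (not_lt.1 hz)]
  · exact (int_P1 (fun z => v (x + s • z)) (hv.comp (by fun_prop))).const_mul _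
  · refine Filter.Eventually.of_forall fun z => ?_
    simp only
    by_cases hz : ‖(2:ℝ) • (z - s⁻¹ • (y - x))‖ < 1
    · have h1 := hnear z hz
      have h2 := hin z (by linarith)
      have h3 := P1_le_one ((2:ℝ) • (z - s⁻¹ • (y - x)))
      have h4 : 7/16 ≤ P1 z := by
        unfold P1
        apply le_max_of_le_left
        nlinarith [norm_nonneg z]
      nlinarith [mul_le_mul_of_nonneg_left h3 h2, mul_le_mul_of_nonneg_left h4 h2]
    · rw [P1_zero _ (not_lt.1 hz), mul_zero]
      by_cases hz1 : ‖z‖ < 1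
      · have := mul_nonneg (hin z hz1) (P1_nonneg z)
        positivity
      · simp [P1_zero _ (not_lt.1 hz1)]

lemma harnack {n : ℕ} (ψ : Eu n → ℝ) (lam : ℝ) (hlam : 0 < lam)
    (hψ : ContDiff ℝ (⊤ : ℕ∞) ψ) (heig : ∀ x, lap n ψ x = -lam * ψ x)
    (x : Eu n) (s m : ℝ) (hs : 0 < s) (hls : lam * s^2 ≤ 1) (hm : 0 ≤ m)
    (hlow : ∀ z ∈ ball x s, -m ≤ ψ z) (y : Eu n) (hy : y ∈ ball x (s/4)) :
    ψ y + m ≤ (8 * 2^n) * (ψ x + m + lam * s^2 * m) := by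
  set c1 : ℝ := ∫ z : Eu n, P1 z with hc1
  have hc1pos : 0 < c1 := c1_pos
  set F : Eu n → ℝ → ℝ := fun y δ => ∫ z, ψ (y + δ • z) * P1 z with hF
  have hI1 : ∀ (y : Eu n) (δ : ℝ), Integrable (fun z => ψ (y + δ • z) * P1 z) := fun y δ =>
    int_P1 _ (hψ.continuous.comp (by fun_prop))
  have hI2 : ∀ (y : Eu n) (δ : ℝ), Integrable (fun z => ψ (y + δ • z) * P1 z ^ 2) := fun y δ =>
    int_P2 _ (hψ.continuous.comp (by fun_prop))
  have hJ1 : Integrable (fun z : Eu n => P1 z) := by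
    simpa using int_P1 (fun _ : Eu n => (1:ℝ)) continuous_const
  have hJ2 : Integrable (fun z : Eu n => P1 z ^ 2) := by
    simpa using int_P2 (fun _ : Eu n => (1:ℝ)) continuous_const
  have hc2 : ∫ z : Eu n, P1 z ^ 2 ≤ c1 := by
    apply integral_mono hJ2 hJ1
    intro z
    have := P1_le_one z; have := P1_nonneg z
    simp only; nlinarith
  have hFd : ∀ (y : Eu n) (δ : ℝ), HasDerivAt (F y)
      (-(lam * δ / 4) * ∫ z, ψ (y + δ • z) * P1 z ^ 2) δ := by
    intro y δ
    have := F_deriv hψ y δ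
    simp_rw [heig, mul_assoc, integral_const_mul] at this
    convert this using 1
    ring
  have hF0 : ∀ y, F y 0 = ψ y * c1 := by
    intro y
    simp [hF, integral_const_mul, hc1]
  have hFm : ∀ (y : Eu n) (δ : ℝ), F y δ + m * c1 = ∫ z, (ψ (y + δ • z) + m) * P1 z := by
    intro y δ
    rw [hF, hc1, ← integral_const_mul, ← integral_add (hI1 y δ) (hJ1.const_mul m)]
    congr 1; ext z; ring
  -- growth at the centre
  have hup : F x s ≤ ψ x * c1 + lam * s^2 / 8 * m * c1 := by
    have hmono : AntitoneOn (fun δ : ℝ => F x δ - lam * δ^2 / 8 * m * c1) (Set.Icc 0 s) := by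
      have hd : ∀ δ : ℝ, HasDerivAt (fun δ : ℝ => F x δ - lam * δ^2 / 8 * m * c1)
          ((-(lam * δ / 4) * ∫ z, ψ (x + δ • z) * P1 z ^ 2) - lam * (2 * δ) / 8 * m * c1) δ := by
        intro δ
        refine (hFd x δ).sub ?_
        have := ((((hasDerivAt_pow 2 δ).const_mul lam).div_const 8).mul_const m).mul_const c1
        simpa using this
      apply antitoneOn_of_deriv_nonpos (convex_Icc 0 s)
      · exact fun δ _ => (hd δ).continuousAt.continuousWithinAt
      · exact fun δ _ => (hd δ).differentiableAt.differentiableWithinAt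
      · intro δ hδ
        rw [interior_Icc] at hδ
        rw [(hd δ).deriv]
        have hlb : -(m * c1) ≤ ∫ z, ψ (x + δ • z) * P1 z ^ 2 := by
          calc -(m * c1) ≤ -(m * ∫ z : Eu n, P1 z ^ 2) := by
                have := mul_le_mul_of_nonneg_left hc2 hm; linarith
            _ = ∫ z : Eu n, -m * P1 z ^ 2 := by rw [integral_const_mul]; ring
            _ ≤ _ := by
              apply integral_mono (hJ2.const_mul _) (hI2 x δ)
              intro z
              simp only
              by_cases hz : ‖z‖ < 1
              · apply mul_le_mul_of_nonneg_right _ (sq_nonneg _)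
                apply hlow
                rw [mem_ball, dist_eq_norm, add_sub_cancel_left, norm_smul,
                  Real.norm_of_nonneg hδ.1.le]
                nlinarith [norm_nonneg z, hδ.1, hδ.2]
              · simp [P1_zero _ (not_lt.1 hz)]
        have h0 : 0 ≤ lam * δ / 4 := by have := hδ.1; positivity
        nlinarith [mul_le_mul_of_nonneg_left hlb h0]
    have := hmono (Set.left_mem_Icc.2 hs.le) (Set.right_mem_Icc.2 hs.le) hs.le
    simp only [hF0] at this
    linarith
  have hdn : (ψ y + m) * c1 ≤ (F y (s/2) + m * c1) * Real.exp (lam * (s/2)^2/8) := by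
    have hmono : MonotoneOn (fun δ : ℝ => (F y δ + m * c1) * Real.exp (lam * δ^2 / 8))
        (Set.Icc 0 (s/2)) := by
      have hd : ∀ δ : ℝ, HasDerivAt (fun δ : ℝ => (F y δ + m * c1) * Real.exp (lam * δ^2 / 8))
          ((-(lam * δ / 4) * ∫ z, ψ (y + δ • z) * P1 z ^ 2) * Real.exp (lam * δ^2 / 8) +
            (F y δ + m * c1) * (Real.exp (lam * δ^2 / 8) * (lam * (2 * δ) / 8))) δ := by
        intro δ
        refine ((hFd y δ).add_const _).mul ?_
        have := (((hasDerivAt_pow 2 δ).const_mul lam).div_const 8).exp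
        simpa using this
      apply monotoneOn_of_deriv_nonneg (convex_Icc 0 (s/2))
      · exact fun δ _ => (hd δ).continuousAt.continuousWithinAt
      · exact fun δ _ => (hd δ).differentiableAt.differentiableWithinAt
      · intro δ hδ
        rw [interior_Icc] at hδ
        rw [(hd δ).deriv]
        have hub : ∫ z, ψ (y + δ • z) * P1 z ^ 2 ≤ F y δ + m * c1 := by
          rw [hFm]
          apply integral_mono (hI2 y δ) (int_P1 (fun z => ψ (y + δ • z) + m)
            ((hψ.continuous.comp (by fun_prop)).add continuous_const))
          intro z
          simp only
          by_cases hz : ‖z‖ < 1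
          · have h1 : -m ≤ ψ (y + δ • z) := by
              apply hlow
              rw [mem_ball] at hy ⊢
              have h2 : dist (y + δ • z) y ≤ s/2 := by
                rw [dist_eq_norm, add_sub_cancel_left, norm_smul, Real.norm_of_nonneg hδ.1.le]
                nlinarith [norm_nonneg z, hδ.1, hδ.2]
              linarith [dist_triangle (y + δ • z) y x]
            have h3 := P1_le_one z
            have h4 := P1_nonneg z
            have h5 : 0 ≤ m * P1 z ^ 2 := by positivity
            have h6 : (ψ (y + δ • z) + m) * P1 z ^ 2 ≤ (ψ (y + δ • z) + m) * P1 z :=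
              mul_le_mul_of_nonneg_left (by nlinarith) (by linarith)
            nlinarith
          · simp [P1_zero _ (not_lt.1 hz)]
        have h0 : 0 ≤ lam * δ / 4 * Real.exp (lam * δ^2 / 8) := by
          have := hδ.1; positivity
        nlinarith [mul_le_mul_of_nonneg_left hub h0]
    have := hmono (Set.left_mem_Icc.2 (by positivity)) (Set.right_mem_Icc.2 (by positivity))
      (by positivity)
    simpa [hF0, add_mul] using this
  have hcmp := scale_cmp (fun z => ψ z + m) (hψ.continuous.add continuous_const) x y s hs
    (fun z hz => by have := hlow z hz; linarith) hy
  rw [← hFm, ← hFm] at hcmp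
  have hexp : Real.exp (lam * (s/2)^2/8) ≤ 3 := by
    calc Real.exp (lam * (s/2)^2/8) ≤ Real.exp 1 := Real.exp_le_exp.2 (by nlinarith)
      _ ≤ 3 := by have := Real.exp_one_lt_d9; linarith
  have hx : -m ≤ ψ x := hlow x (mem_ball_self hs)
  have hQ : 0 ≤ (ψ x + m + lam * s^2 * m) := by
    have : 0 ≤ lam * s^2 * m := by positivity
    linarith
  have hFx : F x s + m * c1 ≤ (ψ x + m + lam * s^2 * m) * c1 := by
    have : 0 ≤ lam * s^2 * m * c1 := by positivity
    nlinarith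
  have h2n : (0:ℝ) < 2^n := by positivity
  have hR : F y (s/2) + m * c1 ≤ 2^n * (16/7) * ((ψ x + m + lam * s^2 * m) * c1) :=
    hcmp.trans (mul_le_mul_of_nonneg_left hFx (by positivity))
  have hfin : (ψ y + m) * c1 ≤ (8 * 2^n * (ψ x + m + lam * s^2 * m)) * c1 := by
    calc (ψ y + m) * c1 ≤ (F y (s/2) + m * c1) * Real.exp (lam * (s/2)^2/8) := hdn
      _ ≤ (2^n * (16/7) * ((ψ x + m + lam * s^2 * m) * c1)) * Real.exp (lam * (s/2)^2/8) :=
        mul_le_mul_of_nonneg_right hR (Real.exp_pos _).le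
      _ ≤ (2^n * (16/7) * ((ψ x + m + lam * s^2 * m) * c1)) * 3 :=
        mul_le_mul_of_nonneg_left hexp (by positivity)
      _ ≤ _ := by
        have : 0 ≤ 2^n * ((ψ x + m + lam * s^2 * m) * c1) := by positivity
        nlinarith
  exact le_of_mul_le_mul_right hfin hc1pos

def D2 (f : ℝ → ℝ) (b : ℝ) : Prop :=
  ∃ f' : ℝ → ℝ, (∀ᶠ t in nhds (0:ℝ), HasDerivAt f (f' t) t) ∧ HasDerivAt f' b 0

lemma D2.add {f g : ℝ → ℝ} {a b : ℝ} (hf : D2 f a) (hg : D2 g b) :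
    D2 (fun t => f t + g t) (a + b) := by
  obtain ⟨f', h1, h2⟩ := hf
  obtain ⟨g', h3, h4⟩ := hg
  refine ⟨fun t => f' t + g' t, ?_, h2.add h4⟩
  filter_upwards [h1, h3] with t ht ht'
  exact ht.add ht'

lemma D2.const_mul {f : ℝ → ℝ} {a : ℝ} (c : ℝ) (hf : D2 f a) :
    D2 (fun t => c * f t) (c * a) := by
  obtain ⟨f', h1, h2⟩ := hf
  refine ⟨fun t => c * f' t, ?_, h2.const_mul c⟩
  filter_upwards [h1] with t ht
  exact ht.const_mul c

lemma D2.const (c : ℝ) : D2 (fun _ => c) 0 :=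
  ⟨fun _ => 0, Filter.Eventually.of_forall fun t => hasDerivAt_const t c, hasDerivAt_const _ _⟩

lemma D2.sum {ι : Type*} (s : Finset ι) {f : ι → ℝ → ℝ} {b : ι → ℝ} (h : ∀ k ∈ s, D2 (f k) (b k)) :
    D2 (fun t => ∑ k ∈ s, f k t) (∑ k ∈ s, b k) := by
  classical
  induction s using Finset.induction_on with
  | empty => simpa using D2.const 0
  | insert a s ha ih =>
    simp_rw [Finset.sum_insert ha]
    exact (h a (by simp)).add (ih fun k hk => h k (by simp [hk]))

lemma D2.nonpos {f : ℝ → ℝ} {a : ℝ} (hf : D2 f a) (hm : IsLocalMax f 0) : a ≤ 0 := by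
  obtain ⟨f', h1, h2⟩ := hf
  by_contra ha
  push Not at ha
  have e1 : deriv f =ᶠ[nhds 0] f' := by
    filter_upwards [h1] with t ht using ht.deriv
  have e2 : deriv (deriv f) 0 = a := by rw [e1.deriv_eq, h2.deriv]
  have hmin : IsLocalMin f 0 := isLocalMin_of_deriv_deriv_pos (by rw [e2]; exact ha)
    hm.deriv_eq_zero h1.self_of_nhds.continuousAt
  have e3 : f =ᶠ[nhds 0] fun _ => f 0 := by
    filter_upwards [hm, hmin] with t h3 h4 using le_antisymm h3 h4
  have e4 : deriv f =ᶠ[nhds 0] fun _ => 0 := by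
    have := e3.deriv
    simpa using this
  have : deriv (deriv f) 0 = 0 := by rw [e4.deriv_eq]; simp
  linarith

lemma lap_test {n : ℕ} {ψ : Eu n → ℝ} (h : ContDiff ℝ (⊤ : ℕ∞) ψ) (p : Eu n) (q : Eu n → ℝ)
    (b : Fin n → ℝ) (hq : ∀ i, D2 (fun t => q (p + t • EuclideanSpace.single i (1:ℝ))) (b i))
    (hmax : IsLocalMax (fun x => ψ x + q x) p) : lap n ψ p + ∑ i, b i ≤ 0 := by
  unfold lap
  rw [← Finset.sum_add_distrib]
  apply Finset.sum_nonpos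
  intro i _
  set e : Eu n := EuclideanSpace.single i (1:ℝ)
  have hl : ∀ t : ℝ, HasDerivAt (fun t : ℝ => p + t • e) e t := fun t => by
    simpa using ((hasDerivAt_id t).smul_const e).const_add p
  have h1 : D2 (fun t => ψ (p + t • e)) (fderiv ℝ (fun y => fderiv ℝ ψ y e) p e) := by
    refine ⟨fun t => fderiv ℝ ψ (p + t • e) e, Filter.Eventually.of_forall fun t => ?_, ?_⟩
    · exact ((h.differentiable (by simp) (p + t • e)).hasFDerivAt).comp_hasDerivAt t (hl t)
    · have h3 := (((contDiff_partial h e).differentiable (by simp) (p + (0:ℝ) • e)).hasFDerivAt).comp_hasDerivAt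
        (0:ℝ) (hl 0)
      have e0 : p + (0:ℝ) • e = p := by simp
      rw [e0] at h3
      exact h3
  refine (h1.add (hq i)).nonpos ?_
  have hc : Filter.Tendsto (fun t : ℝ => p + t • e) (nhds 0) (nhds p) := by
    have := (hl 0).continuousAt.tendsto
    simpa using this
  have := hc.eventually hmax
  unfold IsLocalMax IsMaxFilter
  simpa using this

lemma norm_line {n : ℕ} (p a : Eu n) (i : Fin n) (t : ℝ) :
    ‖p + t • EuclideanSpace.single i (1:ℝ) - a‖^2 = ‖p - a‖^2 + 2 * (p - a) i * t + t^2 := by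
  rw [show p + t • EuclideanSpace.single i (1:ℝ) - a = (p - a) + t • EuclideanSpace.single i (1:ℝ)
    by abel, norm_add_sq_real, norm_smul, inner_smul_right, EuclideanSpace.inner_single_right]
  simp
  ring

lemma quad_deriv (A B t : ℝ) :
    HasDerivAt (fun t : ℝ => A + 2 * B * t + t^2) (2 * B + 2 * t) t := by
  have := ((((hasDerivAt_id t).const_mul (2 * B)).const_add A)).fun_add (hasDerivAt_pow 2 t)
  simpa using this

lemma D2_quad {n : ℕ} (p a : Eu n) (i : Fin n) :
    D2 (fun t => ‖p + t • EuclideanSpace.single i (1:ℝ) - a‖^2) 2 := by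
  simp_rw [norm_line]
  refine ⟨fun t => 2 * (p - a) i + 2 * t, Filter.Eventually.of_forall fun t => ?_, ?_⟩
  · exact quad_deriv _ _ t
  · simpa using ((hasDerivAt_id (0:ℝ)).const_mul 2).const_add (2 * (p - a) i)

lemma D2_pow {n : ℕ} (p a : Eu n) (hpa : p ≠ a) (γ : ℝ) (i : Fin n) :
    D2 (fun t => (‖p + t • EuclideanSpace.single i (1:ℝ) - a‖^2) ^ (-γ))
      (γ * (γ + 1) * (‖p - a‖^2) ^ (-γ-1-1) * (4 * (p - a) i ^ 2) - 2 * γ * (‖p-a‖^2) ^ (-γ-1)) := by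
  simp_rw [norm_line]
  set A := ‖p - a‖^2 with hA
  set B := (p - a) i
  have hApos : 0 < A := by
    have : 0 < ‖p - a‖ := norm_pos_iff.2 (sub_ne_zero.2 hpa)
    positivity
  have hq : ∀ t : ℝ, HasDerivAt (fun t : ℝ => A + 2 * B * t + t^2) (2 * B + 2 * t) t := by
    exact quad_deriv A B
  have hpos : ∀ᶠ t in nhds (0:ℝ), 0 < A + 2 * B * t + t^2 := by
    have : ContinuousAt (fun t : ℝ => A + 2 * B * t + t^2) 0 := (hq 0).continuousAt
    apply this.eventually (lt_mem_nhds _)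
    simpa using hApos
  refine ⟨fun t => (2 * B + 2 * t) * (-γ) * (A + 2 * B * t + t^2) ^ (-γ - 1), ?_, ?_⟩
  · filter_upwards [hpos] with t ht
    exact (hq t).rpow_const (Or.inl ht.ne')
  · have h1 := (hq 0).rpow_const (p := -γ - 1) (Or.inl (by simpa using hApos.ne'))
    have h2 : HasDerivAt (fun t : ℝ => (2 * B + 2 * t) * (-γ)) (2 * (-γ)) 0 := by
      simpa using (((hasDerivAt_id (0:ℝ)).const_mul 2).const_add (2 * B)).mul_const (-γ)
    refine (h2.fun_mul h1).congr_deriv ?_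
    simp only [mul_zero, add_zero, ne_eq, OfNat.ofNat_ne_zero, not_false_eq_true, zero_pow]
    ring

lemma sum_D2_pow {n : ℕ} (p a : Eu n) (hpa : p ≠ a) (γ : ℝ) (hγ : γ = ((n:ℝ) - 2)/2) :
    ∑ i, (γ * (γ + 1) * (‖p - a‖^2) ^ (-γ-1-1) * (4 * (p - a) i ^ 2)
      - 2 * γ * (‖p-a‖^2) ^ (-γ-1)) = 0 := by
  have hApos : 0 < ‖p - a‖^2 := by
    have : 0 < ‖p - a‖ := norm_pos_iff.2 (sub_ne_zero.2 hpa)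
    positivity
  rw [Finset.sum_sub_distrib, ← Finset.mul_sum, ← Finset.mul_sum]
  have h1 : ∑ i, (p - a) i ^ 2 = ‖p - a‖^2 := by
    rw [EuclideanSpace.norm_sq_eq]; simp
  rw [h1, Real.rpow_sub_one hApos.ne' (-γ-1)]
  simp only [Finset.sum_const, Finset.card_univ, Fintype.card_fin, nsmul_eq_mul]
  generalize (‖p - a‖^2) ^ (-γ-1) = R
  generalize ‖p - a‖^2 = A at hApos
  field_simp
  rw [hγ]; ring

def hh {n : ℕ} (lam : ℝ) (y0 z : Eu n) : ℝ := 1 - lam * ‖z - y0‖^2 / n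

lemma hh_le {n : ℕ} (lam : ℝ) (hlam : 0 < lam) (y0 z : Eu n) : hh lam y0 z ≤ 1 := by
  unfold hh
  have : 0 ≤ lam * ‖z - y0‖^2 / n := by positivity
  linarith

lemma hh_ge {n : ℕ} (hn : 3 ≤ n) (lam : ℝ) (hlam : 0 < lam) (y0 z : Eu n) (t : ℝ)
    (hz : z ∈ closedBall y0 t) : 1 - lam * t^2 ≤ hh lam y0 z := by
  unfold hh
  rw [mem_closedBall, dist_eq_norm] at hz
  have h1 : ‖z - y0‖^2 ≤ t^2 := pow_le_pow_left₀ (norm_nonneg _) hz 2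
  have h2 : lam * ‖z - y0‖^2 ≤ lam * t^2 := mul_le_mul_of_nonneg_left h1 hlam.le
  have h3 : lam * ‖z - y0‖^2 / n ≤ lam * ‖z - y0‖^2 := by
    apply div_le_self (by positivity)
    have : (3:ℝ) ≤ n := by exact_mod_cast hn
    linarith
  linarith

lemma lap_neg' {n : ℕ} (ψ : Eu n → ℝ) (x : Eu n) :
    lap n (fun z => -ψ z) x = - lap n ψ x := by
  unfold lap
  rw [← Finset.sum_neg_distrib]
  apply Finset.sum_congr rfl
  intro i _
  have : (fun y : Eu n => fderiv ℝ (fun z => -ψ z) y (EuclideanSpace.single i (1:ℝ))) =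
      fun y => -(fderiv ℝ ψ y (EuclideanSpace.single i (1:ℝ))) := by
    ext y; rw [fderiv_fun_neg]; simp
  rw [this, fderiv_fun_neg]; simp

lemma shell_max {n : ℕ} (hn : 3 ≤ n) (ψ : Eu n → ℝ) (lam : ℝ) (hlam : 0 < lam)
    (hψ : ContDiff ℝ (⊤ : ℕ∞) ψ) (heig : ∀ x, lap n ψ x = -lam * ψ x)
    (y0 : Eu n) (h0 : ψ y0 = 0) (t : ℝ) (ht : 0 < t) (hlt : lam * t^2 ≤ 1/2) :
    ∃ (x : Eu n) (m : ℝ), x ∈ closedBall y0 t ∧ -ψ x = m * hh lam y0 x ∧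
      (∀ z ∈ closedBall y0 t, -ψ z ≤ m * hh lam y0 z) ∧ 0 ≤ m ∧ (0 < m → dist x y0 = t) := by
  have hpos : ∀ z ∈ closedBall y0 t, 0 < hh lam y0 z := fun z hz => by
    have := hh_ge hn lam hlam y0 z t hz
    linarith
  have hhc : Continuous (hh lam y0) := by unfold hh; fun_prop
  obtain ⟨x, hx, hmax⟩ := (isCompact_closedBall y0 t).exists_isMaxOn
    ⟨y0, mem_closedBall_self ht.le⟩ (f := fun z => -ψ z / hh lam y0 z)
    (by
      apply ContinuousOn.div hψ.continuous.neg.continuousOn hhc.continuousOn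
      exact fun z hz => (hpos z hz).ne')
  refine ⟨x, -ψ x / hh lam y0 x, hx, ?_, ?_, ?_, ?_⟩
  · rw [div_mul_cancel₀ _ (hpos x hx).ne']
  · intro z hz
    have := hmax hz
    simp only [Set.mem_ofPred_eq] at this
    rwa [div_le_iff₀ (hpos z hz)] at this
  · have := hmax (mem_closedBall_self ht.le : y0 ∈ closedBall y0 t)
    simpa [h0] using this
  · intro hm
    by_contra hne
    set m := -ψ x / hh lam y0 x with hmdef
    have hlt' : x ∈ ball y0 t := lt_of_le_of_ne hx hne
    have hloc : IsLocalMax (fun z => (-ψ z) + (m * lam / n * ‖z - y0‖^2)) x := by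
      filter_upwards [isOpen_ball.mem_nhds hlt'] with z hz
      have h1 := hmax (ball_subset_closedBall hz)
      simp only [Set.mem_ofPred_eq] at h1
      rw [div_le_iff₀ (hpos z (ball_subset_closedBall hz))] at h1
      have h2 : -ψ x = m * hh lam y0 x := by
        rw [hmdef, div_mul_cancel₀ _ (hpos x hx).ne']
      rw [← hmdef] at h1
      rw [h2]
      unfold hh at h1 ⊢
      have e : ∀ w : ℝ, m * (1 - lam * w / n) = m - m * lam / n * w := fun w => by ring
      rw [e] at h1 ⊢
      linarith
    have := lap_test hψ.neg x (fun z => m * lam / n * ‖z - y0‖^2) (fun _ => m * lam / n * 2)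
      (fun i => (D2_quad x y0 i).const_mul _) hloc
    rw [lap_neg', heig] at this
    simp only [Finset.sum_const, Finset.card_univ, Fintype.card_fin, nsmul_eq_mul] at this
    have hn0 : (n:ℝ) ≠ 0 := by positivity
    have e : (n:ℝ) * (m * lam / n * 2) = 2 * (m * lam) := by field_simp
    rw [e] at this
    have h2 : -ψ x = m * hh lam y0 x := by
      rw [hmdef, div_mul_cancel₀ _ (hpos x hx).ne']
    have h3 : -ψ x ≤ m := by
      rw [h2]; nlinarith [hh_le lam hlam y0 x]
    nlinarith [mul_pos hm hlam]

lemma good_balls {n : ℕ} (hn : 3 ≤ n) (ψ : Eu n → ℝ) (lam : ℝ) (hlam : 0 < lam)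
    (hψ : ContDiff ℝ (⊤ : ℕ∞) ψ) (heig : ∀ x, lap n ψ x = -lam * ψ x)
    (y0 : Eu n) (h0 : ψ y0 = 0) (hcl : ∀ s > 0, ∃ z ∈ ball y0 s, ψ z ≠ 0)
    (C : ℝ) (hC : C = 8 * 2^n) (r : ℝ) (hr : 0 < r) (hlr : lam * (2*r)^2 ≤ 1 / (16 * C))
    (Q : ℝ) (hQ : 1 ≤ Q)
    (hgrow : ∀ b, (∀ z ∈ ball y0 (r/4), ψ z ^ 2 ≤ b^2) → ∀ z ∈ closedBall y0 (2*r), ψ z ^2 ≤ Q^2 * b^2)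
    (J : ℕ) (hJ : 1 ≤ J) (hJQ : 2 * Real.log (4 * C * Q) ≤ J * Real.log (1 + 1/(4*C))) :
    ∃ (G : Finset ℕ) (x : ℕ → Eu n), G ⊆ Finset.range J ∧ (J:ℝ) ≤ 2 * G.card ∧
      ∀ k ∈ G, dist (x k) y0 = r + k * (r / J) ∧ ∀ z ∈ ball (x k) (r / J / 4), ψ z < 0 := by
  have hC1 : 1 ≤ C := by
    rw [hC]
    have : (1:ℝ) ≤ 2^n := one_le_pow₀ (by norm_num)
    linarith
  have hC0 : 0 < C := by linarith
  have hsm : lam * (2*r)^2 ≤ 1/16 := by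
    refine hlr.trans ?_
    apply one_div_le_one_div_of_le (by norm_num); linarith
  have hJ0 : (0:ℝ) < J := by exact_mod_cast hJ
  set d := r / J with hd
  have hd0 : 0 < d := by positivity
  have hdJ : J * d = r := by rw [hd]; field_simp
  have hdr : d ≤ r := by
    rw [hd]; apply div_le_self hr.le; exact_mod_cast hJ
  set t : ℕ → ℝ := fun k => r + k * d with ht
  have htpos : ∀ k, 0 < t k := fun k => by simp only [ht]; positivity
  have htle : ∀ k, k ≤ J → t k ≤ 2 * r := fun k hk => by
    simp only [ht]
    have : (k:ℝ) ≤ J := by exact_mod_cast hk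
    nlinarith
  have hlt : ∀ k, k ≤ J → lam * (t k)^2 ≤ lam * (2*r)^2 := fun k hk =>
    mul_le_mul_of_nonneg_left (pow_le_pow_left₀ (htpos k).le (htle k hk) 2) hlam.le
  have hex : ∀ k, ∃ (x : Eu n) (m : ℝ), k ≤ J → (x ∈ closedBall y0 (t k) ∧ -ψ x = m * hh lam y0 x ∧
      (∀ z ∈ closedBall y0 (t k), -ψ z ≤ m * hh lam y0 z) ∧ 0 ≤ m ∧ (0 < m → dist x y0 = t k)) := by
    intro k
    by_cases hk : k ≤ J
    · obtain ⟨x, m, h⟩ := shell_max hn ψ lam hlam hψ heig y0 h0 (t k) (htpos k)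
        (by linarith [hlt k hk])
      exact ⟨x, m, fun _ => h⟩
    · exact ⟨0, 0, fun h => absurd h hk⟩
  choose x m hxm using hex
  have hub : ∀ k, k ≤ J → ∀ z ∈ closedBall y0 (t k), -ψ z ≤ m k := by
    intro k hk z hz
    have h1 := (hxm k hk).2.2.1 z hz
    have h2 := hh_le lam hlam y0 z
    nlinarith [(hxm k hk).2.2.2.1]
  -- Harnack at y0
  have hsmall : ∀ z ∈ ball y0 (r/4), ψ z + m 0 ≤ C * (2 * m 0) := by
    intro z hz
    have h1 := harnack ψ lam hlam hψ heig y0 r (m 0) hr (by nlinarith) (hxm 0 (Nat.zero_le _)).2.2.2.1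
      (fun z hz => by
        have := hub 0 (Nat.zero_le _) z (ball_subset_closedBall (by simpa [ht] using hz))
        linarith) z hz
    rw [← hC, h0] at h1
    refine h1.trans (mul_le_mul_of_nonneg_left ?_ hC0.le)
    have : lam * r^2 ≤ 1 := by nlinarith
    nlinarith [(hxm 0 (Nat.zero_le _)).2.2.2.1]
  have habs : ∀ z ∈ ball y0 (r/4), ψ z ^ 2 ≤ (2 * C * m 0)^2 := by
    intro z hz
    have hm0 := (hxm 0 (Nat.zero_le _)).2.2.2.1
    have h1 := hsmall z hz
    have h2 := hub 0 (Nat.zero_le _) z (by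
      rw [mem_closedBall]; rw [mem_ball] at hz; simp [ht]; linarith)
    apply sq_le_sq'
    · nlinarith
    · nlinarith
  have hm0 : 0 < m 0 := by
    rcases (hxm 0 (Nat.zero_le _)).2.2.2.1.lt_or_eq with h | h
    · exact h
    · exfalso
      obtain ⟨z, hz, hne⟩ := hcl (r/4) (by positivity)
      have := habs z hz
      rw [← h] at this
      apply hne
      have h3 : ψ z ^ 2 ≤ 0 := by simpa using this
      exact pow_eq_zero_iff (two_ne_zero) |>.1 (le_antisymm h3 (sq_nonneg _))
  have hhp : ∀ k, k ≤ J → 1 - 1/(16*C) ≤ hh lam y0 (x k) := fun k hk => by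
    have := hh_ge hn lam hlam y0 (x k) (t k) (hxm k hk).1
    linarith [hlt k hk]
  have h16 : 1/(16*C) ≤ 1/16 := one_div_le_one_div_of_le (by norm_num) (by linarith)
  have hmono : ∀ k, k < J → m k ≤ m (k+1) := by
    intro k hk
    have h1 := (hxm (k+1) hk).2.2.1 (x k) (by
      have h2 := (hxm k hk.le).1
      refine closedBall_subset_closedBall ?_ h2
      simp only [ht]; push_cast; nlinarith)
    rw [(hxm k hk.le).2.1] at h1
    exact le_of_mul_le_mul_right h1 (by linarith [hhp k hk.le])
  have hmpos : ∀ k, k ≤ J → 0 < m k := by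
    intro k
    induction k with
    | zero => intro _; exact hm0
    | succ k ih => intro hk; exact lt_of_lt_of_le (ih (by omega)) (hmono k (by omega))
  have hmJ : m J ≤ 4 * C * Q * m 0 := by
    have h1 := hgrow _ habs (x J) (closedBall_subset_closedBall (htle J le_rfl) (hxm J le_rfl).1)
    rw [← mul_pow] at h1
    have h2 : -ψ (x J) ≤ Q * (2 * C * m 0) := by
      have := abs_le_of_sq_le_sq h1 (by positivity)
      linarith [neg_le_abs (ψ (x J))]
    rw [(hxm J le_rfl).2.1] at h2
    have h3 := hhp J le_rfl
    nlinarith [hmpos J le_rfl]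
  set η := 1/(4*C) with hη
  have hη0 : 0 < η := by positivity
  set G := (Finset.range J).filter (fun k => m (k+1) ≤ (1 + η) * m k) with hG
  refine ⟨G, x, Finset.filter_subset _ _, ?_, ?_⟩
  · set Bd := (Finset.range J).filter (fun k => ¬ m (k+1) ≤ (1 + η) * m k) with hBd
    have hcard : G.card + Bd.card = J := by
      rw [hG, hBd, Finset.card_filter_add_card_filter_not, Finset.card_range]
    have hlog : 0 < Real.log (1 + η) := Real.log_pos (by linarith)
    have hsum : (Bd.card : ℝ) * Real.log (1 + η) ≤ Real.log (4 * C * Q) := by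
      calc (Bd.card : ℝ) * Real.log (1 + η) = ∑ k ∈ Bd, Real.log (1 + η) := by simp
        _ ≤ ∑ k ∈ Bd, (Real.log (m (k+1)) - Real.log (m k)) := by
          apply Finset.sum_le_sum
          intro k hk
          simp only [hBd, Finset.mem_filter, Finset.mem_range, not_le] at hk
          have hk1 := hmpos k hk.1.le
          rw [le_sub_iff_add_le, ← Real.log_mul (by positivity) hk1.ne']
          exact Real.log_le_log (by positivity) hk.2.le
        _ ≤ ∑ k ∈ Finset.range J, (Real.log (m (k+1)) - Real.log (m k)) := by
          apply Finset.sum_le_sum_of_subset_of_nonneg (Finset.filter_subset _ _)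
          intro k hk _
          rw [Finset.mem_range] at hk
          rw [sub_nonneg]
          exact Real.log_le_log (hmpos k hk.le) (hmono k hk)
        _ = Real.log (m J) - Real.log (m 0) := Finset.sum_range_sub (fun k => Real.log (m k)) J
        _ ≤ _ := by
          rw [sub_le_iff_le_add, ← Real.log_mul (by positivity) hm0.ne']
          exact Real.log_le_log (hmpos J le_rfl) hmJ
    have h2 : 2 * (Bd.card : ℝ) ≤ J := by
      have : 2 * (Bd.card : ℝ) * Real.log (1 + η) ≤ J * Real.log (1 + η) := by linarith
      exact le_of_mul_le_mul_right this hlog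
    have h3 : (G.card : ℝ) + Bd.card = J := by exact_mod_cast hcard
    linarith
  · intro k hk
    simp only [hG, Finset.mem_filter, Finset.mem_range] at hk
    obtain ⟨hkJ, hkr⟩ := hk
    have hkx := hxm k hkJ.le
    have hdist := hkx.2.2.2.2 (hmpos k hkJ.le)
    refine ⟨hdist, ?_⟩
    intro z hz
    have hmk := hmpos k hkJ.le
    have hld : lam * d^2 ≤ 1/(16*C) := by
      refine le_trans (mul_le_mul_of_nonneg_left ?_ hlam.le) hlr
      exact pow_le_pow_left₀ hd0.le (by linarith) 2
    have h1 := harnack ψ lam hlam hψ heig (x k) d ((1+η) * m k) hd0 (by linarith) (by positivity)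
      (fun w hw => by
        have := hub (k+1) hkJ w (by
          rw [mem_closedBall]; rw [mem_ball] at hw
          have := dist_triangle w (x k) y0
          simp only [ht] at hdist ⊢; push_cast
          linarith)
        linarith) z hz
    rw [← hC] at h1
    have h2 : -ψ (x k) ≥ m k * (1 - 1/(16*C)) := by
      rw [hkx.2.1]; exact mul_le_mul_of_nonneg_left (hhp k hkJ.le) hmk.le
    have hη1 : η ≤ 1 := by
      rw [hη, div_le_one (by positivity)]; linarith
    have h3 : ψ (x k) + (1+η) * m k + lam * d^2 * ((1+η) * m k) ≤ m k * (η + 3 * (1/(16*C))) := by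
      have : lam * d^2 * ((1+η) * m k) ≤ 1/(16*C) * (2 * m k) := by
        apply mul_le_mul hld _ (by positivity) (by positivity)
        nlinarith
      linarith
    have h4 : C * (m k * (η + 3 * (1/(16*C)))) = m k * (7/16) := by
      rw [hη]; field_simp; norm_num
    have h5 := mul_le_mul_of_nonneg_left h3 hC0.le
    rw [h4] at h5
    nlinarith

lemma harm_sum (J : ℕ) : ∑ i ∈ Finset.range J, (1:ℝ) / (1 + i) ≤ 1 + Real.log J := by
  have := harmonic_le_one_add_log J
  refine le_trans (le_of_eq ?_) this
  rw [harmonic]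
  push_cast
  apply Finset.sum_congr rfl
  intro i _
  rw [one_div, add_comm]

lemma pot_sum (J j : ℕ) (hj : j < J) (G : Finset ℕ) (hG : G ⊆ Finset.range J) :
    ∑ k ∈ G, (1:ℝ) / (1 + |(k:ℝ) - j|) ≤ 2 * (1 + Real.log J) := by
  have h1 : ∑ k ∈ G, (1:ℝ) / (1 + |(k:ℝ) - j|) ≤
      ∑ k ∈ Finset.range J, (1:ℝ) / (1 + |(k:ℝ) - j|) :=
    Finset.sum_le_sum_of_subset_of_nonneg hG fun _ _ _ => by positivity
  have h2 : ∑ k ∈ Finset.range J, (1:ℝ) / (1 + |(k:ℝ) - j|) =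
      ∑ k ∈ Finset.range j, (1:ℝ) / (1 + |(k:ℝ) - j|) +
      ∑ k ∈ Finset.range (J - j), (1:ℝ) / (1 + |((j + k : ℕ):ℝ) - j|) := by
    conv_lhs => rw [show J = j + (J - j) by omega]
    rw [Finset.sum_range_add]
  have h3 : ∑ k ∈ Finset.range j, (1:ℝ) / (1 + |(k:ℝ) - j|) ≤ ∑ i ∈ Finset.range J, (1:ℝ) / (1 + i) := by
    rw [← Finset.sum_range_reflect]
    calc _ ≤ ∑ k ∈ Finset.range j, (1:ℝ) / (1 + k) := by
          apply Finset.sum_le_sum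
          intro k hk
          rw [Finset.mem_range] at hk
          apply one_div_le_one_div_of_le (by positivity)
          have : ((j - 1 - k : ℕ) : ℝ) = j - 1 - k := by
            rw [Nat.cast_sub (by omega), Nat.cast_sub (by omega)]; simp
          rw [this, abs_sub_comm]
          have := le_abs_self ((j:ℝ) - (j - 1 - k))
          linarith
      _ ≤ _ := Finset.sum_le_sum_of_subset_of_nonneg
          (Finset.range_subset_range.2 hj.le) fun _ _ _ => by positivity
  have h4 : ∑ k ∈ Finset.range (J - j), (1:ℝ) / (1 + |((j + k : ℕ):ℝ) - j|) ≤
      ∑ i ∈ Finset.range J, (1:ℝ) / (1 + i) := by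
    calc _ = ∑ k ∈ Finset.range (J - j), (1:ℝ) / (1 + k) := by
          apply Finset.sum_congr rfl
          intro k _
          push_cast
          rw [add_sub_cancel_left, abs_of_nonneg (by positivity)]
      _ ≤ _ := Finset.sum_le_sum_of_subset_of_nonneg
          (Finset.range_subset_range.2 (by omega)) fun _ _ _ => by positivity
  have := harm_sum J
  linarith

lemma pot_bound {n : ℕ} (J : ℕ) (G : Finset ℕ) (hG : G ⊆ Finset.range J) (hne : G.Nonempty)
    (x : ℕ → Eu n) (d : ℝ) (hd : 0 < d) (γ : ℝ) (hγ : 1/2 ≤ γ)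
    (hsep : ∀ k ∈ G, ∀ l ∈ G, d * |(k:ℝ) - l| ≤ dist (x k) (x l)) (p : Eu n)
    (hp : ∀ k ∈ G, d / 4 ≤ ‖p - x k‖) :
    ∑ k ∈ G, (‖p - x k‖^2) ^ (-γ) ≤ ((d/8)^2) ^ (-γ) * (2 * (1 + Real.log J)) := by
  obtain ⟨j, hj, hmin⟩ := G.exists_min_image (fun k => ‖p - x k‖) hne
  refine le_trans ?_ (mul_le_mul_of_nonneg_left (pot_sum J j (Finset.mem_range.1 (hG hj)) G hG)
    (by positivity))
  rw [Finset.mul_sum]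
  apply Finset.sum_le_sum
  intro k hk
  set a := |(k:ℝ) - j| with ha
  have ha0 : 0 ≤ a := abs_nonneg _
  have hlow : d/8 * (1 + a) ≤ ‖p - x k‖ := by
    have h1 := hp k hk
    by_cases hkj : k = j
    · have : a = 0 := by rw [ha, hkj]; simp
      rw [this]; linarith
    · have h2 : 1 ≤ a := by
        rw [ha]
        have : (1:ℤ) ≤ |(k:ℤ) - j| := Int.one_le_abs (by omega)
        exact_mod_cast this
      have h3 := hsep k hk j hj
      have h4 : dist (x k) (x j) ≤ ‖p - x k‖ + ‖p - x j‖ := by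
        rw [← dist_eq_norm, ← dist_eq_norm, dist_comm p (x k)]
        exact dist_triangle _ _ _
      have h5 := hmin k hk
      nlinarith
  have hb : (0:ℝ) < d/8 * (1 + a) := by positivity
  calc (‖p - x k‖^2) ^ (-γ) ≤ ((d/8 * (1 + a))^2) ^ (-γ) := by
        apply Real.rpow_le_rpow_of_nonpos (by positivity) _ (by linarith)
        exact pow_le_pow_left₀ hb.le hlow 2
    _ = ((d/8)^2) ^ (-γ) * ((1+a)^2) ^ (-γ) := by
        rw [mul_pow, Real.mul_rpow (by positivity) (by positivity)]
    _ ≤ ((d/8)^2) ^ (-γ) * (1 / (1 + a)) := by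
        apply mul_le_mul_of_nonneg_left _ (by positivity)
        have h1 : ((1+a)^2) ^ (-γ) ≤ ((1+a)^2) ^ (-(1/2:ℝ)) :=
          Real.rpow_le_rpow_of_exponent_le (by nlinarith) (by linarith)
        refine h1.trans (le_of_eq ?_)
        rw [Real.rpow_neg (by positivity), ← Real.sqrt_eq_rpow, Real.sqrt_sq (by positivity), one_div]

lemma compare {n : ℕ} (hn : 3 ≤ n) (ψ : Eu n → ℝ) (lam : ℝ) (hlam : 0 < lam)
    (hψ : ContDiff ℝ (⊤ : ℕ∞) ψ) (heig : ∀ x, lap n ψ x = -lam * ψ x)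
    (Ω : Set (Eu n)) (hΩ : IsOpen Ω) (hpos : ∀ z ∈ Ω, 0 < ψ z)
    (hbd : ∀ z ∈ closure Ω, z ∉ Ω → ψ z = 0)
    (x0 : Eu n) (hx0 : x0 ∈ Ω) (hmax : ∀ z ∈ Ω, ψ z ≤ ψ x0)
    (J : ℕ) (hJ : 1 ≤ J) (G : Finset ℕ) (hG : G ⊆ Finset.range J) (hne : G.Nonempty)
    (x : ℕ → Eu n) (r d : ℝ) (hr : 0 < r) (hd : 0 < d) (γ : ℝ) (hγ : γ = ((n:ℝ)-2)/2)
    (hsep : ∀ k ∈ G, ∀ l ∈ G, d * |(k:ℝ) - l| ≤ dist (x k) (x l))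
    (hneg : ∀ k ∈ G, ∀ z ∈ ball (x k) (d/4), ψ z < 0)
    (hnear : ∀ k ∈ G, dist (x k) x0 ≤ 3 * r)
    (hlr : lam * (9 * r)^2 / n < 1/2) :
    G.card * ((3*r)^2) ^ (-γ) ≤
      4 * (((d/8)^2) ^ (-γ) * (2 * (1 + Real.log J))) * (lam * (9*r)^2 / n) := by
  have hn3 : (3:ℝ) ≤ n := by exact_mod_cast hn
  have hγ2 : 1/2 ≤ γ := by rw [hγ]; linarith
  set M := ψ x0 with hM
  have hM0 : 0 < M := hpos x0 hx0
  set U := ((d/8)^2) ^ (-γ) * (2 * (1 + Real.log J)) with hU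
  have hlogJ : 0 ≤ Real.log J := Real.log_nonneg (by exact_mod_cast hJ)
  have hU0 : 0 < U := by positivity
  set β := 1 / (2 * U) with hβ
  have hβ0 : 0 < β := by positivity
  have hfar : ∀ k ∈ G, ∀ p ∈ closure Ω, d/4 ≤ ‖p - x k‖ := by
    intro k hk p hp
    by_contra hlt
    push Not at hlt
    have hpb : p ∈ ball (x k) (d/4) := by rwa [mem_ball, dist_eq_norm]
    obtain ⟨z, hz1, hz2⟩ := mem_closure_iff.1 hp _ isOpen_ball hpb
    have := hneg k hk z hz1
    have := hpos z hz2
    linarith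
  have hneq : ∀ k ∈ G, ∀ p ∈ closure Ω, p ≠ x k := by
    intro k hk p hp h
    have := hfar k hk p hp
    rw [h] at this
    simp at this
    linarith
  set u : Eu n → ℝ := fun p => ∑ k ∈ G, (‖p - x k‖^2) ^ (-γ) with hu
  have hub : ∀ p ∈ closure Ω, u p ≤ U := fun p hp =>
    pot_bound J G hG hne x d hd γ hγ2 hsep p (fun k hk => hfar k hk p hp)
  have hβu : ∀ p ∈ closure Ω, β * u p ≤ 1/2 := fun p hp => by
    have : β * U = 1/2 := by rw [hβ]; field_simp
    nlinarith [hub p hp]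
  set q : Eu n → ℝ := fun p => lam * M / n * ‖p - x0‖^2 + M * β * u p with hq
  have hcont : ContinuousOn (fun p => ψ p + q p) (closedBall x0 (9*r) ∩ closure Ω) := by
    apply hψ.continuous.continuousOn.add
    apply ContinuousOn.add
    · fun_prop
    · apply continuousOn_const.mul
      apply continuousOn_finsetSum
      intro k hk
      apply ContinuousOn.rpow_const
      · fun_prop
      · intro p hp
        left
        have := norm_pos_iff.2 (sub_ne_zero.2 (hneq k hk p hp.2))
        positivity
  have hcomp : IsCompact (closedBall x0 (9*r) ∩ closure Ω) :=
    (isCompact_closedBall _ _).inter_right isClosed_closure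
  have hx0m : x0 ∈ closedBall x0 (9*r) ∩ closure Ω :=
    ⟨mem_closedBall_self (by positivity), subset_closure hx0⟩
  obtain ⟨p, hp, hpm⟩ := hcomp.exists_isMaxOn ⟨x0, hx0m⟩ hcont
  have hge : ψ x0 + q x0 ≤ ψ p + q p := hpm hx0m
  have hqx0 : q x0 = M * β * u x0 := by simp [hq]
  have hu0 : G.card * ((3*r)^2) ^ (-γ) ≤ u x0 := by
    rw [hu, ← nsmul_eq_mul]
    apply Finset.card_nsmul_le_sum
    intro k hk
    apply Real.rpow_le_rpow_of_nonpos _ _ (by linarith)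
    · have := norm_pos_iff.2 (sub_ne_zero.2 (hneq k hk x0 hx0m.2))
      positivity
    · apply pow_le_pow_left₀ (norm_nonneg _)
      rw [← dist_eq_norm, dist_comm]; exact hnear k hk
  have hu00 : 0 ≤ u x0 := le_trans (by positivity) hu0
  have hdist : ‖p - x0‖ ≤ 9 * r := by rw [← dist_eq_norm]; exact hp.1
  have hquad : lam * M / n * ‖p - x0‖^2 ≤ M * (lam * (9*r)^2 / n) := by
    have h1 : ‖p - x0‖^2 ≤ (9*r)^2 := pow_le_pow_left₀ (norm_nonneg _) hdist 2
    have h2 : 0 ≤ lam * M / n := by positivity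
    calc _ ≤ lam * M / n * (9*r)^2 := mul_le_mul_of_nonneg_left h1 h2
      _ = _ := by ring
  by_cases hpΩ : p ∈ Ω
  swap
  · exfalso
    have h1 := hbd p hp.2 hpΩ
    have h2 := hβu p hp.2
    have h3 : q p < M := by
      have : M * β * u p ≤ M * (1/2) := by nlinarith
      simp only [hq]; nlinarith
    have : 0 ≤ M * β * u x0 := by positivity
    linarith
  rcases hdist.lt_or_eq with hlt | heq
  · exfalso
    have hloc : IsLocalMax (fun z => ψ z + q z) p := by
      have ho : IsOpen (ball x0 (9*r) ∩ Ω) := isOpen_ball.inter hΩ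
      filter_upwards [ho.mem_nhds ⟨by rwa [mem_ball, dist_eq_norm], hpΩ⟩] with z hz
      exact hpm ⟨ball_subset_closedBall hz.1, subset_closure hz.2⟩
    have ht := lap_test hψ p q (fun i => lam * M / n * 2 + M * β * ∑ k ∈ G,
      (γ * (γ + 1) * (‖p - x k‖^2) ^ (-γ-1-1) * (4 * (p - x k) i ^ 2)
        - 2 * γ * (‖p - x k‖^2) ^ (-γ-1)))
      (fun i => ((D2_quad p x0 i).const_mul _).add ((D2.sum G fun k hk =>
        D2_pow p (x k) (hneq k hk p hp.2) γ i).const_mul _)) hloc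
    rw [Finset.sum_add_distrib, ← Finset.mul_sum, ← Finset.mul_sum, Finset.sum_comm,
      Finset.sum_eq_zero (s := G) (fun k hk => sum_D2_pow p (x k) (hneq k hk p hp.2) γ hγ), heig] at ht
    simp only [Finset.sum_const, Finset.card_univ, Fintype.card_fin, nsmul_eq_mul] at ht
    have e : lam * M / n * ((n:ℝ) * 2) = 2 * (lam * M) := by field_simp
    rw [e] at ht
    have h1 := hmax p hpΩ
    nlinarith [mul_le_mul_of_nonneg_left h1 hlam.le, mul_pos hlam hM0]
  · have hup : u p ≤ G.card * ((3*r)^2) ^ (-γ) / 2 := by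
      rw [mul_div_assoc, hu, ← nsmul_eq_mul]
      apply Finset.sum_le_card_nsmul
      intro k hk
      have h1 : 6 * r ≤ ‖p - x k‖ := by
        have h2 := dist_triangle p (x k) x0
        rw [dist_eq_norm p x0, heq, dist_eq_norm p (x k)] at h2
        linarith [hnear k hk]
      calc (‖p - x k‖^2) ^ (-γ) ≤ ((6*r)^2) ^ (-γ) := by
            apply Real.rpow_le_rpow_of_nonpos (by positivity) _ (by linarith)
            exact pow_le_pow_left₀ (by positivity) h1 2
        _ = ((3*r)^2) ^ (-γ) * (4:ℝ) ^ (-γ) := by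
            rw [← Real.mul_rpow (by positivity) (by positivity)]; ring_nf
        _ ≤ ((3*r)^2) ^ (-γ) * (1/2) := by
            apply mul_le_mul_of_nonneg_left _ (by positivity)
            have h2 : (4:ℝ) ^ (-γ) ≤ (4:ℝ) ^ (-(1/2:ℝ)) :=
              Real.rpow_le_rpow_of_exponent_le (by norm_num) (by linarith)
            refine h2.trans (le_of_eq ?_)
            rw [Real.rpow_neg (by positivity), ← Real.sqrt_eq_rpow,
              show (4:ℝ) = 2^2 by norm_num, Real.sqrt_sq (by positivity), one_div]
        _ = _ := by ring
    have h1 := hmax p hpΩ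
    have h2 : M * β * u x0 ≤ M * (lam * (9*r)^2 / n) + M * β * u p := by
      rw [hqx0] at hge
      simp only [hq] at hge
      linarith
    have h3 : β * u x0 ≤ (lam * (9*r)^2 / n) + β * u p := by
      have : M * (β * u x0) ≤ M * ((lam * (9*r)^2 / n) + β * u p) := by linarith
      exact le_of_mul_le_mul_left this hM0
    have h4 : β * (G.card * ((3*r)^2) ^ (-γ)) ≤ 2 * (lam * (9*r)^2 / n) := by
      have := mul_le_mul_of_nonneg_left hup hβ0.le
      have := mul_le_mul_of_nonneg_left hu0 hβ0.le
      linarith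
    have h5 := mul_le_mul_of_nonneg_left h4 (by positivity : 0 ≤ 2 * U)
    have e : 2 * U * β = 1 := by rw [hβ]; field_simp
    rw [← mul_assoc, e, one_mul] at h5
    linarith

lemma dbl_iter {n : ℕ} (ψ : Eu n → ℝ) (y0 : Eu n) (E s : ℝ) (hs : 0 < s)
    (hD : ∀ t, 0 < t → t ≤ s → ∀ b, (∀ z ∈ ball y0 t, ψ z ^ 2 ≤ b) →
      ∀ z ∈ ball y0 (2*t), ψ z ^ 2 ≤ E * b) (k : ℕ) :
    ∀ b, (∀ z ∈ ball y0 (s / 2^k), ψ z ^ 2 ≤ b) → ∀ z ∈ ball y0 (2*s), ψ z ^ 2 ≤ E^(k+1) * b := by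
  induction k with
  | zero => intro b hb; simpa using hD s hs le_rfl b (by simpa using hb)
  | succ k ih =>
    intro b hb z hz
    have h1 := hD (s / 2^(k+1)) (by positivity)
      (div_le_self hs.le (one_le_pow₀ (by norm_num))) b hb
    have e : 2 * (s / 2^(k+1)) = s / 2^k := by rw [pow_succ]; field_simp
    rw [e] at h1
    have := ih _ h1 z hz
    rw [pow_succ E (k+1)]; linarith

lemma N_ge {n : ℕ} (ψ : Eu n → ℝ) (hψ : ContDiff ℝ (⊤ : ℕ∞) ψ) (y0 : Eu n) (h0 : ψ y0 = 0)
    (hcl : ∀ s > 0, ∃ z ∈ ball y0 s, ψ z ≠ 0) (N s : ℝ) (hs : 0 < s)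
    (hD : ∀ t, 0 < t → t ≤ s → ∀ b, (∀ z ∈ ball y0 t, ψ z ^ 2 ≤ b) →
      ∀ z ∈ ball y0 (2*t), ψ z ^ 2 ≤ Real.exp N * b) : 1 ≤ N := by
  by_contra hN
  push Not at hN
  have hE : Real.exp N < 3 := by
    have := Real.exp_lt_exp.2 hN
    have := Real.exp_one_lt_d9
    linarith
  have hdiff := (hψ.differentiable (by simp) y0).isBigO_sub
  obtain ⟨L, hL⟩ := hdiff.bound
  obtain ⟨ρ, hρ, hball⟩ := Metric.eventually_nhds_iff_ball.1 hL
  set t := min s ρ with ht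
  have ht0 : 0 < t := lt_min hs hρ
  obtain ⟨z, hz, hne⟩ := hcl (2*t) (by positivity)
  have hz2 : 0 < ψ z ^ 2 := by positivity
  have key : ∀ k : ℕ, ψ z ^ 2 ≤ (Real.exp N / 4)^k * (Real.exp N * (L^2 * t^2)) := by
    intro k
    have h1 := dbl_iter ψ y0 (Real.exp N) t ht0
      (fun u hu hut => hD u hu (hut.trans (min_le_left _ _))) k (L^2 * (t/2^k)^2) (by
        intro w hw
        have hwρ : w ∈ ball y0 ρ := by
          refine ball_subset_ball ?_ hw
          exact (div_le_self ht0.le (one_le_pow₀ (by norm_num))).trans (min_le_right _ _)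
        have h2 := hball w hwρ
        rw [h0, sub_zero, Real.norm_eq_abs, ← dist_eq_norm] at h2
        rw [mem_ball] at hw
        calc ψ w ^ 2 = |ψ w|^2 := (sq_abs _).symm
          _ ≤ (L * dist w y0)^2 := pow_le_pow_left₀ (abs_nonneg _) h2 2
          _ = L^2 * dist w y0^2 := by ring
          _ ≤ _ := mul_le_mul_of_nonneg_left (pow_le_pow_left₀ dist_nonneg hw.le 2) (sq_nonneg _)) z hz
    refine h1.trans (le_of_eq ?_)
    have e4 : (4:ℝ)^k = (2^k)^2 := by rw [← pow_mul, mul_comm, pow_mul]; norm_num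
    rw [div_pow, div_pow, e4, pow_succ]
    field_simp
  have hlim : Filter.Tendsto (fun k : ℕ => (Real.exp N / 4)^k * (Real.exp N * (L^2 * t^2)))
      Filter.atTop (nhds (0 * (Real.exp N * (L^2 * t^2)))) := by
    apply Filter.Tendsto.mul_const
    apply tendsto_pow_atTop_nhds_zero_of_lt_one
    · positivity
    · linarith
  rw [zero_mul] at hlim
  have := ge_of_tendsto' hlim key
  linarith

lemma zero_bd {n : ℕ} (ψ : Eu n → ℝ) (a z : Eu n)
    (hz : z ∈ closure (connectedComponentIn {y | ψ y ≠ 0} a)) (ha : ψ a ≠ 0)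
    (hzn : z ∉ connectedComponentIn {y | ψ y ≠ 0} a) : ψ z = 0 := by
  by_contra hne
  apply hzn
  set Ω := connectedComponentIn {y | ψ y ≠ 0} a
  have h1 : IsPreconnected (insert z Ω) :=
    isPreconnected_connectedComponentIn.subset_closure (Set.subset_insert _ _)
      (Set.insert_subset hz subset_closure)
  have h2 : insert z Ω ⊆ {y | ψ y ≠ 0} :=
    Set.insert_subset hne (connectedComponentIn_subset _ _)
  exact h1.subset_connectedComponentIn (Set.mem_insert_of_mem _ (mem_connectedComponentIn ha)) h2
    (Set.mem_insert _ _)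

lemma pos_on {n : ℕ} (ψ : Eu n → ℝ) (hc : Continuous ψ) (S : Set (Eu n)) (hS : IsPreconnected S)
    (hne : ∀ z ∈ S, ψ z ≠ 0) (a : Eu n) (haS : a ∈ S) (ha : 0 < ψ a) : ∀ z ∈ S, 0 < ψ z := by
  intro z hz
  by_contra hneg
  push Not at hneg
  obtain ⟨w, hw, hw0⟩ := hS.intermediate_value hz haS hc.continuousOn ⟨hneg, ha.le⟩
  exact hne w hw hw0

def sh {n : ℕ} (v : Fin n → ℤ) : Eu n := WithLp.toLp 2 fun i => (v i : ℝ)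

lemma per_sh {n : ℕ} {ψ : Eu n → ℝ} (hp : ZnPeriodic n ψ) (x : Eu n) (v : Fin n → ℤ) :
    ψ (x + sh v) = ψ x := by
  rw [← hp x v]
  congr 1

lemma exists_sh {n : ℕ} (x : Eu n) : ∃ v : Fin n → ℤ, ‖x + sh v‖ ≤ Real.sqrt n := by
  refine ⟨fun i => -⌊x i⌋, ?_⟩
  rw [EuclideanSpace.norm_eq]
  apply Real.sqrt_le_sqrt
  calc ∑ i, ‖(x + sh fun i => -⌊x i⌋) i‖^2 ≤ ∑ i : Fin n, (1:ℝ) := by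
        apply Finset.sum_le_sum
        intro i _
        have e : (x + sh fun i => -⌊x i⌋) i = Int.fract (x i) := by
          simp [sh, Int.fract, sub_eq_add_neg]
        rw [e, Real.norm_of_nonneg (Int.fract_nonneg _)]
        nlinarith [Int.fract_nonneg (x i), Int.fract_lt_one (x i)]
    _ = n := by simp

lemma exists_zero {n : ℕ} (ψ : Eu n → ℝ) (lam : ℝ) (hlam : 0 < lam)
    (hψ : ContDiff ℝ (⊤ : ℕ∞) ψ) (hper : ZnPeriodic n ψ)
    (heig : ∀ x, lap n ψ x = -lam * ψ x) (a : Eu n) (ha : 0 < ψ a) : ∃ z, ψ z = 0 := by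
  by_contra hno
  push Not at hno
  have hpos : ∀ z, 0 < ψ z := fun z =>
    pos_on ψ hψ.continuous Set.univ isPreconnected_univ (fun z _ => hno z) a trivial ha z trivial
  obtain ⟨p, hp, hmin⟩ := (isCompact_closedBall (0 : Eu n) (Real.sqrt n)).exists_isMinOn
    ⟨0, by simp⟩ hψ.continuous.continuousOn
  have hloc : IsLocalMax (fun z => (-ψ z) + (fun _ : Eu n => (0:ℝ)) z) p := by
    refine Filter.Eventually.of_forall fun z => ?_
    obtain ⟨v, hv⟩ := exists_sh z
    have := hmin (show z + sh v ∈ closedBall (0 : Eu n) (Real.sqrt n) by simpa using hv)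
    simp only [Set.mem_ofPred_eq, per_sh hper] at this
    simpa using this
  have := lap_test hψ.neg p (fun _ => 0) (fun _ => 0) (fun i => D2.const 0) hloc
  rw [lap_neg', heig] at this
  simp at this
  nlinarith [hpos p]

lemma exists_max {n : ℕ} (ψ : Eu n → ℝ) (hc : Continuous ψ) (hper : ZnPeriodic n ψ)
    (a : Eu n) (ha : 0 < ψ a) : ∃ x0 ∈ connectedComponentIn {y | ψ y ≠ 0} a,
      ∀ z ∈ connectedComponentIn {y | ψ y ≠ 0} a, ψ z ≤ ψ x0 := by
  set Ω := connectedComponentIn {y | ψ y ≠ 0} a with hΩ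
  set T : Set (Eu n) := {z | ∃ v : Fin n → ℤ, z + sh v ∈ Ω} with hT
  have hneg : ∀ v : Fin n → ℤ, sh (-v) = -(sh v : Eu n) := fun v => by
    ext i; simp [sh]
  have hmove : ∀ z ∈ Ω, ∃ w ∈ closedBall (0 : Eu n) (Real.sqrt n) ∩ T, ψ w = ψ z := by
    intro z hz
    obtain ⟨v, hv⟩ := exists_sh z
    refine ⟨z + sh v, ⟨by simpa using hv, ⟨-v, ?_⟩⟩, per_sh hper z v⟩
    rw [hneg]; simpa using hz
  have haΩ : a ∈ Ω := mem_connectedComponentIn ha.ne'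
  obtain ⟨w0, hw0, hw0e⟩ := hmove a haΩ
  obtain ⟨p, hp, hmax⟩ := ((isCompact_closedBall (0 : Eu n) (Real.sqrt n)).inter_right
    (isClosed_closure (s := T))).exists_isMaxOn ⟨w0, hw0.1, subset_closure hw0.2⟩ hc.continuousOn
  have hle : ∀ z ∈ Ω, ψ z ≤ ψ p := by
    intro z hz
    obtain ⟨w, hw, hwe⟩ := hmove z hz
    rw [← hwe]
    exact hmax ⟨hw.1, subset_closure hw.2⟩
  have hpp : 0 < ψ p := lt_of_lt_of_le ha (hle a haΩ)
  have hopen : IsOpen {y | 0 < ψ y} := isOpen_lt continuous_const hc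
  obtain ⟨ρ, hρ, hball⟩ := Metric.isOpen_iff.1 hopen p hpp
  obtain ⟨z, ⟨v, hzv⟩, hv⟩ := Metric.mem_closure_iff.1 hp.2 ρ hρ
  have hsub : ball (p + sh v) ρ ⊆ {y | ψ y ≠ 0} := by
    intro y hy
    have h1 : y + sh (-v) ∈ ball p ρ := by
      rw [hneg, mem_ball, dist_eq_norm]
      rw [mem_ball, dist_eq_norm] at hy
      convert hy using 2; abel
    have h2 : 0 < ψ (y + sh (-v)) := hball h1
    rw [per_sh hper] at h2
    exact h2.ne'
  have hzb : z + sh v ∈ ball (p + sh v) ρ := by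
    rw [mem_ball, dist_add_right, dist_comm]; exact hv
  have hsub2 : ball (p + sh v) ρ ⊆ Ω := by
    have h3 := (convex_ball (p + sh v) ρ).isPreconnected.subset_connectedComponentIn hzb hsub
    rwa [← connectedComponentIn_eq hzv] at h3
  refine ⟨p + sh v, hsub2 (mem_ball_self hρ), fun y hy => ?_⟩
  rw [per_sh hper]
  exact hle y hy

lemma numer (n : ℕ) (hn : 3 ≤ n) (J : ℕ) (hJ : 1 ≤ J) (c r lam γ : ℝ) (hc : (J:ℝ) ≤ 2 * c)
    (hr : 0 < r) (hlam : 0 < lam) (hγ : γ = ((n:ℝ)-2)/2)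
    (h : c * ((3*r)^2) ^ (-γ) ≤
      4 * (((r/J/8)^2) ^ (-γ) * (2 * (1 + Real.log J))) * (lam * (9*r)^2 / n)) :
    (J:ℝ) ^ (-(2 * (((n:ℝ)-1)*((n:ℝ)-2)/(2*(n:ℝ))))) ≤
      (1296 * (24:ℝ)^(2*γ) * (1 + n/2) / n) * (lam * r^2) := by
  have hn3 : (3:ℝ) ≤ n := by exact_mod_cast hn
  have hJ1 : (1:ℝ) ≤ J := by exact_mod_cast hJ
  have hJ0 : (0:ℝ) < J := by linarith
  have e1 : ((r/J/8)^2) ^ (-γ) = ((3*r)^2) ^ (-γ) * ((24:ℝ)^(2*γ) * (J:ℝ)^(2*γ)) := by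
    have : (r/J/8)^2 = (3*r)^2 * ((24*(J:ℝ))^2)⁻¹ := by field_simp; norm_num
    rw [this, Real.mul_rpow (by positivity) (by positivity), Real.inv_rpow (by positivity),
      Real.rpow_neg (x := (24*(J:ℝ))^2) (by positivity), inv_inv,
      ← Real.mul_rpow (by norm_num) hJ0.le, Real.rpow_mul (by positivity)]
    norm_num
  have hx : 0 < ((3*r)^2) ^ (-γ) := by positivity
  rw [e1] at h
  have h2 : c ≤ 648 * ((24:ℝ)^(2*γ) * (J:ℝ)^(2*γ)) * (1 + Real.log J) * (lam * r^2) / n := by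
    refine le_of_mul_le_mul_right (h.trans (le_of_eq ?_)) hx
    ring
  have hlog : 1 + Real.log J ≤ (1 + n/2) * (J:ℝ)^(2/(n:ℝ)) := by
    have h3 := Real.log_le_rpow_div hJ0.le (ε := 2/(n:ℝ)) (by positivity)
    have h4 : (1:ℝ) ≤ (J:ℝ)^(2/(n:ℝ)) := Real.one_le_rpow hJ1 (by positivity)
    have h5 : (J:ℝ)^(2/(n:ℝ)) / (2/(n:ℝ)) = (n/2) * (J:ℝ)^(2/(n:ℝ)) := by
      field_simp
    rw [h5] at h3
    linarith
  have h6 : (J:ℝ) ≤ (1296 * (24:ℝ)^(2*γ) * (1 + n/2) / n) * (lam * r^2) *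
      ((J:ℝ)^(2*γ) * (J:ℝ)^(2/(n:ℝ))) := by
    have h7 : 648 * ((24:ℝ)^(2*γ) * (J:ℝ)^(2*γ)) * (1 + Real.log J) * (lam * r^2) / n ≤
      648 * ((24:ℝ)^(2*γ) * (J:ℝ)^(2*γ)) * ((1 + n/2) * (J:ℝ)^(2/(n:ℝ))) * (lam * r^2) / n := by
      gcongr
    calc (J:ℝ) ≤ 2 * c := hc
      _ ≤ 2 * (648 * ((24:ℝ)^(2*γ) * (J:ℝ)^(2*γ)) * ((1 + n/2) * (J:ℝ)^(2/(n:ℝ))) * (lam * r^2) / n) := by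
        linarith
      _ = _ := by ring
  have e2 : (J:ℝ) ^ (-(2 * (((n:ℝ)-1)*((n:ℝ)-2)/(2*(n:ℝ))))) =
      J / ((J:ℝ)^(2*γ) * (J:ℝ)^(2/(n:ℝ))) := by
    rw [← Real.rpow_add hJ0, ← Real.rpow_one_sub' hJ0.le]
    · congr 1
      rw [hγ]; field_simp; ring
    · rw [hγ]
      intro h0
      have : 0 < 2/(n:ℝ) := by positivity
      have : (n:ℝ) * (2/(n:ℝ)) = 2 := by field_simp
      nlinarith
  rw [e2, div_le_iff₀ (by positivity)]
  exact h6

lemma core {n : ℕ} (hn : 3 ≤ n) (C ε₀ A e K a : ℝ) (hC : C = 8 * 2^n) (hε : ε₀ = 1/(8*C))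
    (hA : A = (2 * Real.log (4*C) + 4) / Real.log (1 + 1/(4*C)))
    (he : e = ((n:ℝ)-1)*((n:ℝ)-2)/(2*(n:ℝ)))
    (hK : K = 1296 * (24:ℝ)^(2*(((n:ℝ)-2)/2)) * (1 + n/2) / n)
    (ha : a = min (ε₀/2) ((A+1)^(-e) / Real.sqrt K))
    (ψ : Eu n → ℝ) (lam L : ℝ) (hlam : 0 < lam) (hL : 0 < L) (hlL : lam * L^2 = 1)
    (hψ : ContDiff ℝ (⊤ : ℕ∞) ψ) (heig : ∀ x, lap n ψ x = -lam * ψ x)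
    (Ω : Set (Eu n)) (hΩ : IsOpen Ω) (hpos : ∀ z ∈ Ω, 0 < ψ z)
    (hbd : ∀ z ∈ closure Ω, z ∉ Ω → ψ z = 0)
    (x0 : Eu n) (hx0 : x0 ∈ Ω) (hmax : ∀ z ∈ Ω, ψ z ≤ ψ x0)
    (r : ℝ) (hr : 0 < r) (y0 : Eu n) (hy0 : y0 ∈ closure Ω) (hy1 : y0 ∉ Ω)
    (hyx : dist y0 x0 < r) (N : ℝ)
    (hD : ∀ t, 0 < t → t ≤ ε₀ * L → ∀ b, (∀ z ∈ ball y0 t, ψ z ^ 2 ≤ b) →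
      ∀ z ∈ ball y0 (2*t), ψ z ^ 2 ≤ Real.exp N * b) :
    a * L * N^(-e) ≤ r := by
  have hn3 : (3:ℝ) ≤ n := by exact_mod_cast hn
  have hC1 : 8 ≤ C := by
    rw [hC]
    have : (1:ℝ) ≤ 2^n := one_le_pow₀ (by norm_num)
    linarith
  have hε0 : 0 < ε₀ := by rw [hε]; positivity
  have he0 : 0 ≤ e := by
    rw [he]; apply div_nonneg <;> nlinarith
  have hlg : 0 < Real.log (1 + 1/(4*C)) := Real.log_pos (by
    have : 0 < 1/(4*C) := by positivity
    linarith)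
  have hl4 : 0 < Real.log (4*C) := Real.log_pos (by linarith)
  have hA0 : 0 < A := by rw [hA]; positivity
  have hK0 : 0 < K := by rw [hK]; positivity
  have ha1 : a ≤ ε₀/2 := by rw [ha]; exact min_le_left _ _
  have ha2 : a ≤ (A+1)^(-e) / Real.sqrt K := by rw [ha]; exact min_le_right _ _
  have ha0 : 0 < a := by
    rw [ha]; apply lt_min <;> positivity
  have h0 : ψ y0 = 0 := hbd y0 hy0 hy1
  have hcl : ∀ s > 0, ∃ z ∈ ball y0 s, ψ z ≠ 0 := by
    intro s hs
    obtain ⟨z, hz, hd⟩ := Metric.mem_closure_iff.1 hy0 s hs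
    exact ⟨z, by rwa [mem_ball, dist_comm], (hpos z hz).ne'⟩
  have hN : 1 ≤ N := N_ge ψ hψ y0 h0 hcl N (ε₀*L) (by positivity) hD
  have hNe : N^(-e) ≤ 1 := Real.rpow_le_one_of_one_le_of_nonpos hN (by linarith)
  have hNe0 : 0 < N^(-e) := Real.rpow_pos_of_pos (by linarith) _
  by_cases hrL : ε₀ * L < 2 * r
  · have h1 : a * L ≤ ε₀/2 * L := by gcongr
    have h2 : a * L * N^(-e) ≤ a * L * 1 := by gcongr
    linarith
  push Not at hrL
  have hlr4 : lam * (2*r)^2 ≤ ε₀^2 := by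
    calc lam * (2*r)^2 ≤ lam * (ε₀ * L)^2 := by gcongr
      _ = ε₀^2 * (lam * L^2) := by ring
      _ = ε₀^2 := by rw [hlL, mul_one]
  have hε2 : ε₀^2 ≤ 1/(16*C) := by
    rw [hε, div_pow, one_pow]
    apply one_div_le_one_div_of_le (by positivity)
    nlinarith
  have hε3 : ε₀^2 ≤ 1/128 := hε2.trans (by
    apply one_div_le_one_div_of_le (by norm_num); linarith)
  set J := ⌈A * N⌉₊ with hJd
  have hAN : 0 < A * N := by positivity
  have hJ : 1 ≤ J := Nat.ceil_pos.2 hAN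
  have hJ1 : (1:ℝ) ≤ J := by exact_mod_cast hJ
  have hJl : A * N ≤ J := Nat.le_ceil _
  have hJu : (J:ℝ) ≤ (A+1) * N := by
    have := (Nat.ceil_lt_add_one hAN.le).le
    rw [← hJd] at this
    linarith
  obtain ⟨G, x, hG, hGc, hGx⟩ := good_balls hn ψ lam hlam hψ heig y0 h0 hcl C hC r hr
    (hlr4.trans hε2) (Real.exp (2*N)) (Real.one_le_exp (by linarith))
    (by
      intro b hb z hz
      have := dbl_iter ψ y0 (Real.exp N) (2*r) (by positivity)
        (fun t ht htr => hD t ht (htr.trans hrL)) 3 (b^2)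
        (by
          intro w hw
          exact hb w (by convert hw using 2; ring)) z
        (closedBall_subset_ball (by linarith) hz)
      have e3 : Real.exp N ^ (3+1) = Real.exp (2*N)^2 := by
        rw [← Real.exp_nat_mul, ← Real.exp_nat_mul]; congr 1; push_cast; ring
      rwa [e3] at this) J hJ
    (by
      rw [Real.log_mul (by positivity) (by positivity), Real.log_exp]
      have h3 : A * Real.log (1 + 1/(4*C)) = 2 * Real.log (4*C) + 4 := by
        rw [hA, div_mul_cancel₀ _ hlg.ne']
      have h4 : A * N * Real.log (1 + 1/(4*C)) ≤ J * Real.log (1 + 1/(4*C)) := by gcongr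
      nlinarith)
  have hne : G.Nonempty := by
    rw [← Finset.card_pos]
    have : (0:ℝ) < G.card := by linarith
    exact_mod_cast this
  have hd : 0 < r / J := by positivity
  have hcmp := compare hn ψ lam hlam hψ heig Ω hΩ hpos hbd x0 hx0 hmax J hJ G hG hne x r (r/J)
    hr hd (((n:ℝ)-2)/2) rfl
    (by
      intro k hk l hl
      have h1 := (hGx k hk).1
      have h2 := (hGx l hl).1
      have h3 := abs_dist_sub_le (x k) (x l) y0
      rw [h1, h2] at h3
      have : r + k * (r/J) - (r + l * (r/J)) = (r/J) * ((k:ℝ) - l) := by ring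
      rwa [this, abs_mul, abs_of_pos hd] at h3)
    (fun k hk => (hGx k hk).2)
    (by
      intro k hk
      have h1 := (hGx k hk).1
      have h2 := dist_triangle (x k) y0 x0
      have h3 : (k:ℝ) * (r/J) ≤ J * (r/J) := by
        have : (k:ℝ) ≤ J := by exact_mod_cast (Finset.mem_range.1 (hG hk)).le
        gcongr
      have h4 : (J:ℝ) * (r/J) = r := by field_simp
      linarith)
    (by
      rw [div_lt_iff₀ (by linarith)]
      nlinarith)
  have hnum := numer n hn J hJ G.card r lam (((n:ℝ)-2)/2) hGc hr hlam rfl hcmp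
  rw [← hK, ← he] at hnum
  have hM : ((A+1)*N)^(-(2*e)) ≤ K * (lam * r^2) :=
    (Real.rpow_le_rpow_of_nonpos (by linarith) hJu (by linarith)).trans hnum
  have hMe : ((A+1)*N)^(-(2*e)) = ((A+1)^(-e) * N^(-e))^2 := by
    rw [← Real.mul_rpow (by linarith) (by linarith), ← Real.rpow_natCast, ← Real.rpow_mul (by positivity)]
    congr 1; push_cast; ring
  rw [hMe] at hM
  have hfin : ((A+1)^(-e) / Real.sqrt K * L * N^(-e)) ≤ r := by
    refine (sq_le_sq₀ (by positivity) hr.le).1 ?_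
    have e5 : ((A+1)^(-e) / Real.sqrt K * L * N^(-e))^2 =
        ((A+1)^(-e) * N^(-e))^2 * (L^2 / K) := by
      have : Real.sqrt K ^ 2 = K := Real.sq_sqrt hK0.le
      rw [mul_pow, mul_pow, div_pow, this]; ring
    rw [e5]
    calc ((A+1)^(-e) * N^(-e))^2 * (L^2 / K) ≤ K * (lam * r^2) * (L^2 / K) := by gcongr
      _ = r^2 * (lam * L^2) := by field_simp
      _ = r^2 := by rw [hlL, mul_one]
  calc a * L * N^(-e) ≤ (A+1)^(-e) / Real.sqrt K * L * N^(-e) := by gcongr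
    _ ≤ r := hfin
lemma exists_radius {n : ℕ} (ψ : Eu n → ℝ) (lam : ℝ) (hlam : 0 < lam)
    (hψ : ContDiff ℝ (⊤ : ℕ∞) ψ) (hper : ZnPeriodic n ψ)
    (heig : ∀ x, lap n ψ x = -lam * ψ x) (a : Eu n) (ha : 0 < ψ a) (x0 : Eu n)
    (hx0 : x0 ∈ connectedComponentIn {y | ψ y ≠ 0} a) :
    0 < innerRadius (connectedComponentIn {y | ψ y ≠ 0} a) ∧
    ∃ y0 ∈ closure (connectedComponentIn {y | ψ y ≠ 0} a),
      y0 ∉ connectedComponentIn {y | ψ y ≠ 0} a ∧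
      dist y0 x0 < 2 * innerRadius (connectedComponentIn {y | ψ y ≠ 0} a) := by
  set Ω := connectedComponentIn {y | ψ y ≠ 0} a with hΩ
  have hop : IsOpen Ω := by
    apply IsOpen.connectedComponentIn
    exact isOpen_ne_fun hψ.continuous continuous_const
  have hsub : Ω ⊆ {y | ψ y ≠ 0} := connectedComponentIn_subset _ _
  obtain ⟨z, hz⟩ := exists_zero ψ lam hlam hψ hper heig a ha
  have hbdd : BddAbove {ρ : ℝ | 0 < ρ ∧ ∃ c, Metric.ball c ρ ⊆ Ω} := by
    refine ⟨Real.sqrt n, ?_⟩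
    rintro ρ ⟨hρ, c, hc⟩
    by_contra hlt
    push Not at hlt
    obtain ⟨v, hv⟩ := exists_sh (z - c)
    have h1 : z + sh v ∈ ball c ρ := by
      rw [mem_ball, dist_eq_norm]
      have : z + sh v - c = z - c + sh v := by abel
      rw [this]
      linarith
    have h2 := hsub (hc h1)
    simp only [Set.mem_ofPred_eq, per_sh hper] at h2
    exact h2 hz
  obtain ⟨ρ, hρ, hball⟩ := Metric.isOpen_iff.1 hop x0 hx0
  have hI : 0 < innerRadius Ω := lt_of_lt_of_le hρ (le_csSup hbdd ⟨hρ, x0, hball⟩)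
  refine ⟨hI, ?_⟩
  by_contra hno
  push Not at hno
  have h1 : ball x0 (2 * innerRadius Ω) ⊆ Ω := by
    apply (convex_ball x0 (2 * innerRadius Ω)).isPreconnected.subset_of_closure_inter_subset hop
    · exact ⟨x0, mem_ball_self (by positivity), hx0⟩
    · rintro y ⟨hy, hyb⟩
      by_contra hyn
      have := hno y hy hyn
      rw [mem_ball] at hyb
      linarith
  have h2 : 2 * innerRadius Ω ≤ innerRadius Ω := le_csSup hbdd ⟨by positivity, x0, h1⟩
  linarith

lemma doubling_of_sSup {n : ℕ} (ψ : Eu n → ℝ) (hc : Continuous ψ) (y0 : Eu n)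
    (hcl : ∀ s > 0, ∃ z ∈ ball y0 s, ψ z ≠ 0) (N t : ℝ) (ht : 0 < t)
    (hN : Real.log (sSup ((fun y => (ψ y)^2) '' Metric.ball y0 (2*t)) /
                      sSup ((fun y => (ψ y)^2) '' Metric.ball y0 t)) ≤ N) (b : ℝ)
    (hb : ∀ z ∈ ball y0 t, ψ z ^ 2 ≤ b) : ∀ z ∈ ball y0 (2*t), ψ z ^ 2 ≤ Real.exp N * b := by
  have hbdd : ∀ s, BddAbove ((fun y => (ψ y)^2) '' Metric.ball y0 s) := by
    intro s
    refine ((isCompact_closedBall y0 s).bddAbove_image (f := fun y => (ψ y)^2)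
      (by fun_prop)).mono (Set.image_mono ball_subset_closedBall)
  have hpos : ∀ s > 0, 0 < sSup ((fun y => (ψ y)^2) '' Metric.ball y0 s) := by
    intro s hs
    obtain ⟨z, hz, hne⟩ := hcl s hs
    exact lt_of_lt_of_le (by positivity : 0 < ψ z ^ 2) (le_csSup (hbdd s) ⟨z, hz, rfl⟩)
  intro z hz
  have h1 := hpos t ht
  have h2 := hpos (2*t) (by positivity)
  have h3 := (Real.log_le_iff_le_exp (div_pos h2 h1)).1 hN
  rw [div_le_iff₀ h1] at h3
  have h4 : sSup ((fun y => (ψ y)^2) '' Metric.ball y0 t) ≤ b := by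
    refine csSup_le ((nonempty_ball.2 ht).image _) ?_
    rintro _ ⟨w, hw, rfl⟩
    exact hb w hw
  calc ψ z ^ 2 ≤ sSup ((fun y => (ψ y)^2) '' Metric.ball y0 (2*t)) := le_csSup (hbdd _) ⟨z, hz, rfl⟩
    _ ≤ _ := h3
    _ ≤ _ := by gcongr

lemma main_pos {n : ℕ} (hn : 3 ≤ n) (C ε₀ A e K a : ℝ) (hC : C = 8 * 2^n) (hε : ε₀ = 1/(8*C))
    (hA : A = (2 * Real.log (4*C) + 4) / Real.log (1 + 1/(4*C)))
    (he : e = ((n:ℝ)-1)*((n:ℝ)-2)/(2*(n:ℝ)))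
    (hK : K = 1296 * (24:ℝ)^(2*(((n:ℝ)-2)/2)) * (1 + n/2) / n)
    (ha : a = min (ε₀/2) ((A+1)^(-e) / Real.sqrt K))
    (ψ : Eu n → ℝ) (lam L : ℝ) (hlam : 0 < lam) (hL : 0 < L) (hlL : lam * L^2 = 1)
    (hψ : ContDiff ℝ (⊤ : ℕ∞) ψ) (hper : ZnPeriodic n ψ) (heig : ∀ x, lap n ψ x = -lam * ψ x)
    (p : Eu n) (hp : 0 < ψ p) (N : ℝ)
    (hN : ∀ x s, 0 < s → s ≤ ε₀ * L →
      Real.log (sSup ((fun y => (ψ y)^2) '' Metric.ball x (2*s)) /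
                      sSup ((fun y => (ψ y)^2) '' Metric.ball x s)) ≤ N) :
    a * L * N^(-e) ≤ 2 * innerRadius (connectedComponentIn {y | ψ y ≠ 0} p) := by
  obtain ⟨x0, hx0, hmax⟩ := exists_max ψ hψ.continuous hper p hp
  obtain ⟨hI, y0, hy0, hy1, hyx⟩ := exists_radius ψ lam hlam hψ hper heig p hp x0 hx0
  have hsub : connectedComponentIn {y | ψ y ≠ 0} p ⊆ {y | ψ y ≠ 0} := connectedComponentIn_subset _ _
  refine core hn C ε₀ A e K a hC hε hA he hK ha ψ lam L hlam hL hlL hψ heig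
    (connectedComponentIn {y | ψ y ≠ 0} p)
    (IsOpen.connectedComponentIn (isOpen_ne_fun hψ.continuous continuous_const))
    (pos_on ψ hψ.continuous _ isPreconnected_connectedComponentIn (fun z hz => hsub hz) p
      (mem_connectedComponentIn hp.ne') hp)
    (fun z hz hzn => zero_bd ψ p z hz hp.ne' hzn) x0 hx0 hmax _ (by positivity) y0 hy0 hy1 hyx N ?_
  intro t ht htL
  refine doubling_of_sSup ψ hψ.continuous y0 ?_ N t ht (hN y0 t ht htL)
  intro s hs
  obtain ⟨z, hz, hd⟩ := Metric.mem_closure_iff.1 hy0 s hs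
  exact ⟨z, by rwa [mem_ball, dist_comm], hsub hz⟩

end NodalAux

theorem inner_radius_from_doubling_index
    (n : ℕ) (hn : 3 ≤ n) :
    ∃ ε₀ a₅ : ℝ, ε₀ ∈ Set.Ioo (0:ℝ) 1 ∧ 0 < a₅ ∧
      ∀ (ψ : EuclideanSpace ℝ (Fin n) → ℝ) (lam : ℝ),
        1 ≤ lam → ContDiff ℝ (⊤ : ℕ∞) ψ → ZnPeriodic n ψ →
        (∀ x, lap n ψ x = -lam * ψ x) → (∃ x, ψ x ≠ 0) →
        ∀ Ω, IsNodalDomain ψ Ω →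
          a₅ * lam ^ (-(1:ℝ)/2) *
            (sSup {t : ℝ | ∃ (x : EuclideanSpace ℝ (Fin n)) (s : ℝ),
                0 < s ∧ s ≤ ε₀ * lam ^ (-(1:ℝ)/2) ∧
                t = Real.log (sSup ((fun y => (ψ y)^2) '' Metric.ball x (2*s)) /
                      sSup ((fun y => (ψ y)^2) '' Metric.ball x s))})
              ^ (-(((n:ℝ)-1)*((n:ℝ)-2))/(2*(n:ℝ)))
            ≤ innerRadius Ω := by
  have hn3 : (3:ℝ) ≤ n := by exact_mod_cast hn
  set C : ℝ := 8 * 2^n with hC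
  set ε₀ : ℝ := 1/(8*C) with hε
  set A : ℝ := (2 * Real.log (4*C) + 4) / Real.log (1 + 1/(4*C)) with hA
  set e : ℝ := ((n:ℝ)-1)*((n:ℝ)-2)/(2*(n:ℝ)) with he
  set K : ℝ := 1296 * (24:ℝ)^(2*(((n:ℝ)-2)/2)) * (1 + n/2) / n with hK
  set a : ℝ := min (ε₀/2) ((A+1)^(-e) / Real.sqrt K) with ha
  have hC1 : 8 ≤ C := by
    have : (1:ℝ) ≤ 2^n := one_le_pow₀ (by norm_num)
    linarith
  have hε0 : 0 < ε₀ := by positivity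
  have hε1 : ε₀ < 1 := by
    rw [hε, div_lt_one (by positivity)]; linarith
  have hlg : 0 < Real.log (1 + 1/(4*C)) := Real.log_pos (by
    have : 0 < 1/(4*C) := by positivity
    linarith)
  have hl4 : 0 < Real.log (4*C) := Real.log_pos (by linarith)
  have hA0 : 0 < A := by positivity
  have hK0 : 0 < K := by positivity
  have ha0 : 0 < a := lt_min (by positivity) (by positivity)
  have he0 : 0 < e := by
    apply div_pos <;> nlinarith
  refine ⟨ε₀, a/2, ⟨hε0, hε1⟩, by positivity, ?_⟩
  intro ψ lam hlam1 hψ hper heig _ Ω hΩ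
  have hlam : 0 < lam := by linarith
  have hexp : -(((n:ℝ)-1)*((n:ℝ)-2))/(2*(n:ℝ)) = -e := by rw [he, neg_div]
  rw [hexp]
  set L : ℝ := lam ^ (-(1:ℝ)/2) with hLd
  have hL : 0 < L := Real.rpow_pos_of_pos hlam _
  have hlL : lam * L^2 = 1 := by
    rw [hLd, ← Real.rpow_natCast, ← Real.rpow_mul hlam.le]
    norm_num
    rw [Real.rpow_neg_one]; field_simp
  set S : Set ℝ := {t : ℝ | ∃ (x : EuclideanSpace ℝ (Fin n)) (s : ℝ),
                0 < s ∧ s ≤ ε₀ * L ∧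
                t = Real.log (sSup ((fun y => (ψ y)^2) '' Metric.ball x (2*s)) /
                      sSup ((fun y => (ψ y)^2) '' Metric.ball x s))} with hS
  by_cases hbdd : BddAbove S
  · have hN : ∀ x s, 0 < s → s ≤ ε₀ * L →
      Real.log (sSup ((fun y => (ψ y)^2) '' Metric.ball x (2*s)) /
                      sSup ((fun y => (ψ y)^2) '' Metric.ball x s)) ≤ sSup S :=
      fun x s hs hsL => le_csSup hbdd ⟨x, s, hs, hsL, rfl⟩
    obtain ⟨p, hp, rfl⟩ := hΩ
    rcases lt_or_gt_of_ne hp with hneg | hpos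
    · have := NodalAux.main_pos hn C ε₀ A e K a hC hε hA he hK ha (fun z => -ψ z) lam L hlam hL hlL
        hψ.neg (fun x v => by simpa using hper x v)
        (fun x => by rw [NodalAux.lap_neg', heig]; ring) p (by simpa using hneg) (sSup S)
        (by simpa only [neg_sq] using hN)
      simp only [ne_eq, neg_eq_zero] at this
      simp only [ne_eq]
      linarith
    · have := NodalAux.main_pos hn C ε₀ A e K a hC hε hA he hK ha ψ lam L hlam hL hlL
        hψ hper heig p hpos (sSup S) hN
      linarith
  · rw [Real.sSup_of_not_bddAbove hbdd, Real.zero_rpow (by linarith), mul_zero]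
    exact Real.sSup_nonneg (fun ρ hρ => hρ.1.le)
end
end
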